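/- arXiv:2102.00135 — 8 statements merged into one kernel-verified Lean document; each statement's English description precedes it below -/
import Mathlib

section
/- (Performance difference lemma.) For any two policies π and π' and any state s ∈ S, V^{π'}(s) − V^π(s) = (1/(1−γ)) Σ_{s'∈S} d_s^{π'}(s') [ ⟨A^π(s',·), π'(·|s')⟩ + h^{π'}(s') − h^π(s') ], where A^π(s',a) = Q^π(s',a) − V^π(s') is the advantage function. -/
open Finset

noncomputable section

namespace RL

/-- The probability simplex on a finite set `A`. -/
def simplex (A : Type*) [Fintype A] : Set (A → ℝ) :=
  {p | (∀ a, 0 ≤ p a) ∧ ∑ a, p a = 1}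

/-- A policy assigns to each state a distribution over actions. -/
def IsPolicy {S A : Type*} [Fintype A] (π : S → A → ℝ) : Prop :=
  ∀ s, π s ∈ simplex A

/-- `KL q p` is the Bregman (KL) divergence `D_q^p = ∑_a p a * log (p a / q a)`. -/
def KL {A : Type*} [Fintype A] (q p : A → ℝ) : ℝ :=
  ∑ a, p a * Real.log (p a / q a)

/-- The state transition matrix `P^π` induced by policy `π`. -/
def Pmat {S A : Type*} [Fintype A] (P : S → A → S → ℝ) (π : S → A → ℝ) :
    Matrix S S ℝ :=
  Matrix.of fun s s' => ∑ a, π s a * P s a s'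

/-- `V` satisfies the Bellman equation for policy `π`, cost `c`, regularizer `h`,
and discount factor `γ`. -/
def IsValue {S A : Type*} [Fintype S] [Fintype A] (P : S → A → S → ℝ)
    (c : S → A → ℝ) (h : S → (A → ℝ) → ℝ) (γ : ℝ) (π : S → A → ℝ)
    (V : S → ℝ) : Prop :=
  ∀ s, V s = (∑ a, π s a * c s a) + h s (π s)
    + γ * ∑ s', (∑ a, π s a * P s a s') * V s'

/-- The action-value function `Q^π` determined by a state-value function `V`. -/
def Qfun {S A : Type*} [Fintype S] (P : S → A → S → ℝ) (c : S → A → ℝ)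
    (h : S → (A → ℝ) → ℝ) (γ : ℝ) (π : S → A → ℝ) (V : S → ℝ) :
    S → A → ℝ :=
  fun s a => c s a + h s (π s) + γ * ∑ s', P s a s' * V s'

/-- The discounted state-visitation distribution `d_s^π(s')`. -/
def dvisit {S A : Type*} [Fintype S] [Fintype A] [DecidableEq S]
    (P : S → A → S → ℝ) (γ : ℝ) (π : S → A → ℝ) (s s' : S) : ℝ :=
  (1 - γ) * ∑' t : ℕ, γ ^ t * ((Pmat P π) ^ t) s s'

/-- `next` minimizes `p ↦ η * (⟨G, p⟩ + hreg p) + KL base p` over the simplex. -/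
def IsProxStep {A : Type*} [Fintype A] (G : A → ℝ) (hreg : (A → ℝ) → ℝ)
    (η : ℝ) (base next : A → ℝ) : Prop :=
  next ∈ simplex A ∧ ∀ p ∈ simplex A,
    η * ((∑ a, G a * next a) + hreg next) + KL base next ≤
      η * ((∑ a, G a * p a) + hreg p) + KL base p

/-- `h` is convex with modulus `μ` relative to KL, with subgradients `h'`. -/
def ConvexReg {S A : Type*} [Fintype A] (h : S → (A → ℝ) → ℝ)
    (h' : S → (A → ℝ) → A → ℝ) (μ : ℝ) : Prop :=
  ∀ s : S, ∀ p ∈ simplex A, ∀ q ∈ simplex A,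
    μ * KL q p ≤ h s p - (h s q + ∑ a, h' s q a * (p a - q a))

theorem pow_bounds {S : Type*} [Fintype S] [DecidableEq S] (M : Matrix S S ℝ)
    (h0 : ∀ s s', 0 ≤ M s s') (h1 : ∀ s, ∑ s', M s s' = 1) (t : ℕ) :
    (∀ s s', 0 ≤ (M ^ t) s s') ∧ ∀ s, ∑ s', (M ^ t) s s' = 1 := by
  induction t with
  | zero =>
    refine ⟨fun s s' => ?_, fun s => ?_⟩
    · rw [pow_zero, Matrix.one_apply]; split_ifs <;> norm_num
    · simp [Matrix.one_apply]
  | succ n ih =>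
    refine ⟨fun s s' => ?_, fun s => ?_⟩
    · rw [pow_succ, Matrix.mul_apply]
      exact Finset.sum_nonneg fun i _ => mul_nonneg (ih.1 _ _) (h0 _ _)
    · simp only [pow_succ, Matrix.mul_apply]
      rw [Finset.sum_comm]
      simp only [← Finset.mul_sum, h1, mul_one, ih.2]

theorem resolvent {S : Type*} [Fintype S] [DecidableEq S] (M : Matrix S S ℝ)
    (h0 : ∀ s s', 0 ≤ M s s') (h1 : ∀ s, ∑ s', M s s' = 1) (γ : ℝ) (hγ0 : 0 < γ)
    (hγ1 : γ < 1) (D : S → ℝ) (s : S) :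
    ∑ s', (∑' t : ℕ, γ ^ t * (M ^ t) s s') * (D s' - γ * ∑ u, M s' u * D u) = D s := by
  have hs : ∀ s', Summable fun t : ℕ => γ ^ t * (M ^ t) s s' := by
    intro s'
    refine Summable.of_nonneg_of_le
      (fun t => mul_nonneg (by positivity) ((pow_bounds M h0 h1 t).1 _ _)) (fun t => ?_)
      (summable_geometric_of_lt_one hγ0.le hγ1)
    have hb := pow_bounds M h0 h1 t
    have : (M ^ t) s s' ≤ 1 := by
      rw [← hb.2 s]
      exact Finset.single_le_sum (fun i _ => hb.1 s i) (Finset.mem_univ s')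
    exact mul_le_of_le_one_right (by positivity) this
  have hA := hasSum_sum (s := Finset.univ) fun s' _ =>
    (hs s').hasSum.mul_right (D s' - γ * ∑ u, M s' u * D u)
  have hf : Summable fun t : ℕ => ∑ s', γ ^ t * (M ^ t) s s' * D s' :=
    summable_sum fun s' _ => (hs s').mul_right (D s')
  have hB := hf.hasSum.sub ((hasSum_nat_add_iff' 1).2 hf.hasSum)
  refine (hA.unique (Eq.mp (congrArg (fun F => HasSum F _) (funext ?_)) hB)).trans ?_
  rotate_left
  · simp [Matrix.one_apply]
  · intro t
    have : ∑ s', γ ^ (t + 1) * (M ^ (t + 1)) s s' * D s'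
        = ∑ s', γ ^ t * (M ^ t) s s' * (γ * ∑ u, M s' u * D u) := by
      simp only [pow_succ M, Matrix.mul_apply, Finset.mul_sum, Finset.sum_mul]
      rw [Finset.sum_comm]
      refine Finset.sum_congr rfl fun _ _ => Finset.sum_congr rfl fun _ _ => ?_
      ring
    beta_reduce
    rw [this, ← Finset.sum_sub_distrib]
    exact Finset.sum_congr rfl fun _ _ => by ring

/-- performance difference lemma: for any two policies `π, π'`
and any state `s`,
`V^{π'}(s) - V^π(s) = (1/(1-γ)) ∑_{s'} d_s^{π'}(s') [⟨A^π(s',·), π'(·|s')⟩ + h^{π'}(s') - h^π(s')]`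
where `A^π(s',a) = Q^π(s',a) - V^π(s')`. -/
theorem performance_difference {S A : Type*} [Fintype S] [Fintype A]
    [Nonempty S] [Nonempty A] [DecidableEq S]
    (P : S → A → S → ℝ) (hP0 : ∀ s a s', 0 ≤ P s a s')
    (hP1 : ∀ s a, ∑ s', P s a s' = 1)
    (c : S → A → ℝ) (γ : ℝ) (hγ0 : 0 < γ) (hγ1 : γ < 1)
    (h : S → (A → ℝ) → ℝ)
    (π π' : S → A → ℝ) (hπ : IsPolicy π) (hπ' : IsPolicy π')
    (Vπ Vπ' : S → ℝ)
    (hVπ : IsValue P c h γ π Vπ) (hVπ' : IsValue P c h γ π' Vπ')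
    (s : S) :
    Vπ' s - Vπ s =
      (1 / (1 - γ)) * ∑ s', dvisit P γ π' s s' *
        ((∑ a, (Qfun P c h γ π Vπ s' a - Vπ s') * π' s' a)
          + (h s' (π' s') - h s' (π s'))) := by
  have h0 : ∀ s s', 0 ≤ Pmat P π' s s' := fun s s' =>
    Finset.sum_nonneg fun a _ => mul_nonneg ((hπ' s).1 a) (hP0 s a s')
  have h1 : ∀ s, ∑ s', Pmat P π' s s' = 1 := by
    intro s
    simp only [Pmat, Matrix.of_apply]
    rw [Finset.sum_comm]
    simp only [← Finset.mul_sum, hP1, mul_one, (hπ' s).2]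
  have key := resolvent (Pmat P π') h0 h1 γ hγ0 hγ1 (fun u => Vπ' u - Vπ u) s
  have hg : ∀ s', (∑ a, (Qfun P c h γ π Vπ s' a - Vπ s') * π' s' a)
          + (h s' (π' s') - h s' (π s'))
      = (Vπ' s' - Vπ s') - γ * ∑ u, Pmat P π' s' u * (Vπ' u - Vπ u) := by
    intro s'
    have e1 : ∑ a, (Qfun P c h γ π Vπ s' a - Vπ s') * π' s' a
        = (∑ a, π' s' a * c s' a) + (h s' (π s') - Vπ s') * ∑ a, π' s' a
          + γ * ∑ a, π' s' a * ∑ u, P s' a u * Vπ u := by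
      simp only [Qfun]
      rw [Finset.mul_sum, Finset.mul_sum, ← Finset.sum_add_distrib, ← Finset.sum_add_distrib]
      exact Finset.sum_congr rfl fun _ _ => by ring
    have e2 : ∑ a, π' s' a * ∑ u, P s' a u * Vπ u
        = ∑ u, (∑ a, π' s' a * P s' a u) * Vπ u := by
      simp only [Finset.mul_sum, Finset.sum_mul]
      rw [Finset.sum_comm]
      exact Finset.sum_congr rfl fun _ _ => Finset.sum_congr rfl fun _ _ => by ring
    have e3 := hVπ' s'
    simp only [Pmat, Matrix.of_apply, mul_sub, Finset.sum_sub_distrib]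
    rw [e1, e2, (hπ' s').2]
    linarith
  have hne : (1 - γ) ≠ 0 := by linarith
  simp only [hg, dvisit, mul_assoc (1 - γ)]
  rw [← Finset.mul_sum, key, ← mul_assoc, one_div, inv_mul_cancel₀ hne, one_mul]

end RL
end
end

section
/- (Generalized monotonicity.) Let π* be an optimal policy and ν* a stationary distribution of P^{π*}. Then for every policy π, Σ_{s} ν*(s) [ ⟨Q^π(s,·), π(·|s) − π*(·|s)⟩ + h^π(s) − h^{π*}(s) ] = (1−γ) Σ_{s} ν*(s) (V^π(s) − V^{π*}(s)). In particular, since V^π(s) ≥ V^{π*}(s) for all s, the left-hand side is nonnegative. -/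
open Finset

noncomputable section

namespace RL

/-- generalized monotonicity: for an optimal policy `π*` with
stationary distribution `ν*`, and any policy `π`,
`∑_s ν*(s) [⟨Q^π(s,·), π(·|s) - π*(·|s)⟩ + h^π(s) - h^{π*}(s)]
  = (1-γ) ∑_s ν*(s) (V^π(s) - V^{π*}(s)) ≥ 0`. -/
theorem generalized_monotonicity {S A : Type*} [Fintype S] [Fintype A]
    [Nonempty S] [Nonempty A]
    (P : S → A → S → ℝ) (hP0 : ∀ s a s', 0 ≤ P s a s')
    (hP1 : ∀ s a, ∑ s', P s a s' = 1)
    (c : S → A → ℝ) (γ : ℝ) (hγ0 : 0 < γ) (hγ1 : γ < 1)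
    (h : S → (A → ℝ) → ℝ)
    (V : (S → A → ℝ) → S → ℝ)
    (hV : ∀ w : S → A → ℝ, IsPolicy w → IsValue P c h γ w (V w))
    (πstar : S → A → ℝ) (hπstar : IsPolicy πstar)
    (hopt : ∀ w : S → A → ℝ, IsPolicy w → ∀ s, V πstar s ≤ V w s)
    (ν : S → ℝ) (hν0 : ∀ s, 0 ≤ ν s) (hν1 : ∑ s, ν s = 1)
    (hstat : ∀ s', ∑ s, ν s * (∑ a, πstar s a * P s a s') = ν s')
    (π : S → A → ℝ) (hπ : IsPolicy π) :
    (∑ s, ν s * ((∑ a, Qfun P c h γ π (V π) s a * (π s a - πstar s a))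
        + (h s (π s) - h s (πstar s)))
      = (1 - γ) * ∑ s, ν s * (V π s - V πstar s))
    ∧ 0 ≤ ∑ s, ν s * ((∑ a, Qfun P c h γ π (V π) s a * (π s a - πstar s a))
        + (h s (π s) - h s (πstar s))) := by
  have key : ∀ w : S → A → ℝ, IsPolicy w → ∀ s,
      ∑ a, Qfun P c h γ π (V π) s a * w s a = (∑ a, w s a * c s a) + h s (π s)
        + γ * ∑ s', (∑ a, w s a * P s a s') * V π s' := by
    intro w hw s
    have h1 : ∑ s', (∑ a, w s a * P s a s') * V π s'
        = ∑ a, w s a * ∑ s', P s a s' * V π s' := by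
      simp only [Finset.sum_mul, Finset.mul_sum]
      rw [Finset.sum_comm]
      simp only [mul_assoc]
    have h2 : h s (π s) = ∑ a, w s a * h s (π s) := by
      rw [← Finset.sum_mul, (hw s).2, one_mul]
    rw [h1, h2, Finset.mul_sum, ← Finset.sum_add_distrib, ← Finset.sum_add_distrib]
    refine Finset.sum_congr rfl fun a _ => ?_
    simp only [Qfun]
    ring
  have stat : ∀ f : S → ℝ,
      ∑ s, ν s * ∑ s', (∑ a, πstar s a * P s a s') * f s' = ∑ s, ν s * f s := by
    intro f
    calc _ = ∑ s', (∑ s, ν s * (∑ a, πstar s a * P s a s')) * f s' := by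
          have e1 : ∀ s, ν s * ∑ s', (∑ a, πstar s a * P s a s') * f s'
              = ∑ s', ν s * ((∑ a, πstar s a * P s a s') * f s') :=
            fun s => Finset.mul_sum _ _ _
          rw [Finset.sum_congr rfl fun s _ => e1 s, Finset.sum_comm]
          refine Finset.sum_congr rfl fun s' _ => ?_
          rw [Finset.sum_mul]
          refine Finset.sum_congr rfl fun s _ => ?_
          ring
      _ = _ := by simp only [hstat]
  have main : ∑ s, ν s * ((∑ a, Qfun P c h γ π (V π) s a * (π s a - πstar s a))
        + (h s (π s) - h s (πstar s)))
      = (1 - γ) * ∑ s, ν s * (V π s - V πstar s) := by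
    have e : ∀ s, ν s * ((∑ a, Qfun P c h γ π (V π) s a * (π s a - πstar s a))
        + (h s (π s) - h s (πstar s)))
        = ν s * V π s - ν s * V πstar s
          + γ * (ν s * ∑ s', (∑ a, πstar s a * P s a s') * V πstar s')
          - γ * (ν s * ∑ s', (∑ a, πstar s a * P s a s') * V π s') := by
      intro s
      have a1 := hV π hπ s
      have a2 := hV πstar hπstar s
      simp only [mul_sub, Finset.sum_sub_distrib]
      rw [key π hπ s, key πstar hπstar s, ← a1]
      linear_combination (ν s) * a2
    rw [Finset.sum_congr rfl fun s _ => e s]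
    simp only [Finset.sum_sub_distrib, Finset.sum_add_distrib, ← Finset.mul_sum, stat, mul_sub]
    ring
  refine ⟨main, ?_⟩
  rw [main]
  exact mul_nonneg (by linarith) (Finset.sum_nonneg fun s _ =>
    mul_nonneg (hν0 s) (sub_nonneg.2 (hopt π hπ s)))

end RL
end
end

section
/- (Sublinear convergence of PMD for general convex regularizers.) Suppose h is convex (modulus μ = 0) relative to KL, π_0 is the uniform policy, and the PMD iterates use constant stepsize η_k = η > 0: π_{k+1}(·|s) = argmin_{p∈Δ_A}{ η[⟨Q^{π_k}(s,·), p⟩ + h^p(s)] + D_{π_k}^p(s) } for all s. Then for every k ≥ 0: f(π_{k+1}) − f(π*) ≤ ( ηγ[f(π_0) − f(π*)] + log|A| ) / ( η(1−γ)(k+1) ). -/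
open Finset

noncomputable section

namespace RL

lemma KL_nonneg' {A : Type*} [Fintype A] (q p : A → ℝ) (hq : q ∈ simplex A)
    (hp : p ∈ simplex A) (hpos : ∀ a, 0 < q a) : 0 ≤ KL q p := by
  have h1 : ∑ a, (p a - q a) ≤ KL q p := by
    unfold KL
    apply Finset.sum_le_sum
    intro a _
    rcases (hp.1 a).eq_or_lt with h0 | h0
    · rw [← h0]; simp [(hpos a).le]
    · have := Real.one_sub_inv_le_log_of_pos (div_pos h0 (hpos a))
      have h2 := mul_le_mul_of_nonneg_left this h0.le
      refine le_trans (le_of_eq ?_) h2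
      have := h0.ne'
      have := (hpos a).ne'
      field_simp
  rw [Finset.sum_sub_distrib, hp.2, hq.2] at h1
  simpa using h1

lemma KL_self' {A : Type*} [Fintype A] (q : A → ℝ) (hpos : ∀ a, 0 < q a) : KL q q = 0 := by
  unfold KL
  apply Finset.sum_eq_zero
  intro a _
  rw [div_self (hpos a).ne']; simp

lemma KL_unif {A : Type*} [Fintype A] [Nonempty A] (q p : A → ℝ) (hp : p ∈ simplex A)
    (hq : ∀ a, q a = 1 / (Fintype.card A : ℝ)) : KL q p ≤ Real.log (Fintype.card A) := by
  have hc : (0 : ℝ) < Fintype.card A := by exact_mod_cast Fintype.card_pos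
  have : KL q p ≤ ∑ a, p a * Real.log (Fintype.card A) := by
    unfold KL
    apply Finset.sum_le_sum
    intro a _
    rcases (hp.1 a).eq_or_lt with h0 | h0
    · rw [← h0]; simp
    · apply mul_le_mul_of_nonneg_left _ h0.le
      have h1 : p a ≤ 1 := by
        rw [← hp.2]
        exact Finset.single_le_sum (f := p) (fun i _ => hp.1 i) (Finset.mem_univ a)
      rw [hq a]
      apply Real.log_le_log
      · positivity
      · rw [div_div_eq_mul_div, div_one]
        nlinarith
  rwa [← Finset.sum_mul, hp.2, one_mul] at this

lemma three_point {A : Type*} [Fintype A] (G : A → ℝ) (hr : (A → ℝ) → ℝ)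
    (hr' : (A → ℝ) → A → ℝ)
    (hc : ∀ p ∈ simplex A, ∀ q ∈ simplex A, hr q + ∑ a, hr' q a * (p a - q a) ≤ hr p)
    (η : ℝ) (hη : 0 < η) (b n p : A → ℝ) (hb : ∀ a, 0 < b a) (hn : ∀ a, 0 < n a)
    (hp : p ∈ simplex A) (hs : IsProxStep G hr η b n) :
    η * ((∑ a, G a * n a) + hr n) + KL b n + KL n p ≤
      η * ((∑ a, G a * p a) + hr p) + KL b p := by
  obtain ⟨hns, hmin⟩ := hs
  set q : ℝ → A → ℝ := fun t a => n a + t * (p a - n a) with hq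
  have hqs : ∀ t, 0 ≤ t → t ≤ 1 → q t ∈ simplex A := by
    intro t h0 h1
    refine ⟨fun a => ?_, ?_⟩
    · have := hp.1 a
      have := (hn a).le
      simp only [hq]; nlinarith
    · simp only [hq, Finset.sum_add_distrib, ← Finset.mul_sum, Finset.sum_sub_distrib,
        hp.2, hns.2]; ring
  have hcv : ∀ t, 0 ≤ t → t ≤ 1 → hr (q t) ≤ (1 - t) * hr n + t * hr p := by
    intro t h0 h1
    have e1 := hc n hns (q t) (hqs t h0 h1)
    have e2 := hc p hp (q t) (hqs t h0 h1)
    have s1 : ∑ a, hr' (q t) a * (n a - q t a) = -t * ∑ a, hr' (q t) a * (p a - n a) := by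
      rw [Finset.mul_sum]; apply Finset.sum_congr rfl; intro a _; simp only [hq]; ring
    have s2 : ∑ a, hr' (q t) a * (p a - q t a) = (1 - t) * ∑ a, hr' (q t) a * (p a - n a) := by
      rw [Finset.mul_sum]; apply Finset.sum_congr rfl; intro a _; simp only [hq]; ring
    rw [s1] at e1
    rw [s2] at e2
    have f1 := mul_le_mul_of_nonneg_left e1 (sub_nonneg.2 h1)
    have f2 := mul_le_mul_of_nonneg_left e2 h0
    linarith
  have hd : HasDerivAt (fun t => KL b (q t))
      (∑ a, ((p a - n a) * Real.log (n a / b a) + (p a - n a))) 0 := by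
    unfold KL
    apply HasDerivAt.fun_sum
    intro a _
    have hq1 : HasDerivAt (fun t => q t a) (p a - n a) 0 := by
      simp only [hq]
      simpa using ((hasDerivAt_id (0 : ℝ)).mul_const (p a - n a)).const_add (n a)
    have hq0 : q 0 a = n a := by simp [hq]
    have hne : q 0 a / b a ≠ 0 := by rw [hq0]; exact (div_pos (hn a) (hb a)).ne'
    have := hq1.fun_mul ((hq1.div_const (b a)).log hne)
    rw [hq0] at this
    have e : n a * ((p a - n a) / b a / (n a / b a)) = p a - n a := by
      have := (hn a).ne'
      have := (hb a).ne'
      field_simp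
    rw [e] at this
    exact this
  have hq0 : q 0 = n := by funext a; simp [hq]
  set L := (∑ a, G a * n a) + hr n with hL
  set M := (∑ a, G a * p a) + hr p with hM
  have key : ∀ t, 0 < t → t ≤ 1 → η * (L - M) ≤ t⁻¹ * (KL b (q t) - KL b n) := by
    intro t h0 h1
    have e := hmin (q t) (hqs t h0.le h1)
    have e2 := hcv t h0.le h1
    have s : ∑ a, G a * q t a = (1 - t) * (∑ a, G a * n a) + t * ∑ a, G a * p a := by
      rw [Finset.mul_sum, Finset.mul_sum, ← Finset.sum_add_distrib]
      apply Finset.sum_congr rfl; intro a _; simp only [hq]; ring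
    rw [s] at e
    have e3 := mul_le_mul_of_nonneg_left e2 hη.le
    rw [← div_eq_inv_mul, le_div_iff₀ h0]
    simp only [hL, hM]
    linarith
  have hlim := hd.tendsto_slope_zero_right
  have hge : η * (L - M) ≤ ∑ a, ((p a - n a) * Real.log (n a / b a) + (p a - n a)) := by
    refine ge_of_tendsto hlim ?_
    filter_upwards [Ioc_mem_nhdsGT (show (0:ℝ) < 1 by norm_num)] with t ht
    simpa [hq0] using key t ht.1 ht.2
  have hsum : ∑ a, ((p a - n a) * Real.log (n a / b a) + (p a - n a))
      = KL b p - KL n p - KL b n := by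
    rw [Finset.sum_add_distrib, Finset.sum_sub_distrib, hp.2, hns.2]
    unfold KL
    rw [sub_self, add_zero, ← Finset.sum_sub_distrib, ← Finset.sum_sub_distrib]
    apply Finset.sum_congr rfl
    intro a _
    rcases (hp.1 a).eq_or_lt with h0 | h0
    · rw [← h0]; simp
    · rw [Real.log_div h0.ne' (hb a).ne', Real.log_div h0.ne' (hn a).ne',
        Real.log_div (hn a).ne' (hb a).ne']
      ring
  rw [hsum] at hge
  linarith

lemma max_principle {S : Type*} [Fintype S] [Nonempty S] (K : S → S → ℝ)
    (hK0 : ∀ s s', 0 ≤ K s s') (hK1 : ∀ s, ∑ s', K s s' = 1) (γ : ℝ) (hγ0 : 0 < γ)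
    (hγ1 : γ < 1) (x : S → ℝ) (hx : ∀ s, x s ≤ γ * ∑ s', K s s' * x s') : ∀ s, x s ≤ 0 := by
  obtain ⟨m, hm⟩ := Finite.exists_max x
  have h1 : ∑ s', K m s' * x s' ≤ x m := by
    calc _ ≤ ∑ s', K m s' * x m :=
          Finset.sum_le_sum fun s' _ => mul_le_mul_of_nonneg_left (hm s') (hK0 m s')
      _ = x m := by rw [← Finset.sum_mul, hK1, one_mul]
  have h2 := hx m
  have h3 := mul_le_mul_of_nonneg_left h1 hγ0.le
  intro s
  have := hm s
  by_contra hcon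
  push Not at hcon
  nlinarith

lemma Q_pair {S A : Type*} [Fintype S] [Fintype A] (P : S → A → S → ℝ)
    (c : S → A → ℝ) (h : S → (A → ℝ) → ℝ) (γ : ℝ) (w : S → A → ℝ) (V : S → ℝ) (s : S)
    (p : A → ℝ) (hp : p ∈ simplex A) :
    ∑ a, Qfun P c h γ w V s a * p a
      = (∑ a, p a * c s a) + h s (w s) + γ * ∑ s', (∑ a, p a * P s a s') * V s' := by
  have e : ∑ s', (∑ a, p a * P s a s') * V s' = ∑ a, p a * ∑ s', P s a s' * V s' := by
    simp_rw [Finset.sum_mul, Finset.mul_sum]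
    rw [Finset.sum_comm]
    simp_rw [mul_assoc]
  rw [e]
  have e2 : h s (w s) = ∑ a, p a * h s (w s) := by rw [← Finset.sum_mul, hp.2, one_mul]
  rw [e2, Finset.mul_sum, ← Finset.sum_add_distrib, ← Finset.sum_add_distrib]
  apply Finset.sum_congr rfl
  intro a _
  unfold Qfun
  ring

/-- sublinear convergence of PMD for general convex regularizers:
if `h` is convex (modulus 0) relative to KL, `π_0` is the uniform policy, and
the PMD iterates use a constant stepsize `η > 0`, then for every `k`:
`f(π_{k+1}) - f(π*) ≤ (ηγ[f(π_0) - f(π*)] + log|A|) / (η(1-γ)(k+1))`. -/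
theorem pmd_sublinear_convergence {S A : Type*} [Fintype S] [Fintype A]
    [Nonempty S] [Nonempty A]
    (P : S → A → S → ℝ) (hP0 : ∀ s a s', 0 ≤ P s a s')
    (hP1 : ∀ s a, ∑ s', P s a s' = 1)
    (c : S → A → ℝ) (γ : ℝ) (hγ0 : 0 < γ) (hγ1 : γ < 1)
    (h : S → (A → ℝ) → ℝ) (h' : S → (A → ℝ) → A → ℝ)
    (hconv : ConvexReg h h' 0)
    (V : (S → A → ℝ) → S → ℝ)
    (hV : ∀ w : S → A → ℝ, IsPolicy w → IsValue P c h γ w (V w))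
    (πstar : S → A → ℝ) (hπstar : IsPolicy πstar)
    (hopt : ∀ w : S → A → ℝ, IsPolicy w → ∀ s, V πstar s ≤ V w s)
    (ν : S → ℝ) (hν0 : ∀ s, 0 ≤ ν s) (hν1 : ∑ s, ν s = 1)
    (hstat : ∀ s', ∑ s, ν s * (∑ a, πstar s a * P s a s') = ν s')
    (η : ℝ) (hη : 0 < η)
    (π : ℕ → S → A → ℝ)
    (hunif : ∀ s a, π 0 s a = 1 / (Fintype.card A : ℝ))
    (hpol : ∀ k, IsPolicy (π k)) (hpos : ∀ k s a, 0 < π k s a)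
    (hstep : ∀ k s, IsProxStep (Qfun P c h γ (π k) (V (π k)) s) (h s) η
      (π k s) (π (k+1) s)) :
    ∀ k : ℕ,
      (∑ s, ν s * V (π (k+1)) s) - (∑ s, ν s * V πstar s)
        ≤ (η * γ * ((∑ s, ν s * V (π 0) s) - (∑ s, ν s * V πstar s))
            + Real.log (Fintype.card A)) / (η * (1 - γ) * (k + 1)) := by
  have hc : ∀ s, ∀ p ∈ simplex A, ∀ q ∈ simplex A,
      h s q + ∑ a, h' s q a * (p a - q a) ≤ h s p := by
    intro s p hp q hq
    have := hconv s p hp q hq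
    linarith
  -- policy improvement
  have himp : ∀ k s, (∑ a, π (k+1) s a * c s a) + h s (π (k+1) s)
      + γ * ∑ s', (∑ a, π (k+1) s a * P s a s') * V (π k) s' ≤ V (π k) s := by
    intro k s
    have h1 := (hstep k s).2 (π k s) (hpol k s)
    rw [Q_pair _ _ _ _ _ _ _ _ (hpol k s), Q_pair _ _ _ _ _ _ _ _ (hpol (k+1) s),
      KL_self' _ (hpos k s)] at h1
    have h2 := KL_nonneg' _ _ (hpol k s) (hpol (k+1) s) (hpos k s)
    have h3 := hV _ (hpol k) s
    rw [h3]
    by_contra hcon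
    push Not at hcon
    have := mul_lt_mul_of_pos_left hcon hη
    linarith
  have hker0 : ∀ k s s', 0 ≤ ∑ a, π k s a * P s a s' := fun k s s' =>
    Finset.sum_nonneg fun a _ => mul_nonneg (hpos k s a).le (hP0 s a s')
  have hker1 : ∀ k s, ∑ s', ∑ a, π k s a * P s a s' = 1 := by
    intro k s
    rw [Finset.sum_comm]
    simp_rw [← Finset.mul_sum, hP1, mul_one]
    exact (hpol k s).2
  have hdiff : ∀ (K : S → ℝ) (x y : S → ℝ),
      ∑ s', K s' * (x s' - y s') = ∑ s', K s' * x s' - ∑ s', K s' * y s' := by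
    intro K x y
    rw [← Finset.sum_sub_distrib]
    exact Finset.sum_congr rfl fun _ _ => by ring
  have hmono : ∀ k s, V (π (k+1)) s ≤ V (π k) s := by
    intro k s
    have := max_principle (fun s s' => ∑ a, π (k+1) s a * P s a s') (hker0 (k+1)) (hker1 (k+1))
      γ hγ0 hγ1 (fun s => V (π (k+1)) s - V (π k) s) (by
        intro s
        simp only [hdiff]
        have h1 := himp k s
        have h2 := hV _ (hpol (k+1)) s
        linarith) s
    linarith
  have hstepV : ∀ k s, V (π (k+1)) s ≤ (∑ a, π (k+1) s a * c s a) + h s (π (k+1) s)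
      + γ * ∑ s', (∑ a, π (k+1) s a * P s a s') * V (π k) s' := by
    intro k s
    rw [hV _ (hpol (k+1)) s]
    have : ∑ s', (∑ a, π (k+1) s a * P s a s') * V (π (k+1)) s'
        ≤ ∑ s', (∑ a, π (k+1) s a * P s a s') * V (π k) s' :=
      Finset.sum_le_sum fun s' _ => mul_le_mul_of_nonneg_left (hmono k s') (hker0 (k+1) s s')
    have := mul_le_mul_of_nonneg_left this hγ0.le
    linarith
  have hpt : ∀ k s, η * (V (π (k+1)) s - V πstar s - γ * (∑ s', (∑ a, πstar s a * P s a s') *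
      (V (π k) s' - V πstar s'))) + KL (π (k+1) s) (πstar s) ≤ KL (π k s) (πstar s) := by
    intro k s
    have h1 := three_point _ _ _ (hc s) η hη _ _ _ (hpos k s) (hpos (k+1) s) (hπstar s) (hstep k s)
    rw [Q_pair _ _ _ _ _ _ _ _ (hπstar s), Q_pair _ _ _ _ _ _ _ _ (hpol (k+1) s)] at h1
    have h2 := KL_nonneg' _ _ (hpol k s) (hpol (k+1) s) (hpos k s)
    have h3 := hV _ hπstar s
    have h4 := mul_le_mul_of_nonneg_left (hstepV k s) hη.le
    rw [hdiff, h3]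
    linarith
  set D : ℕ → ℝ := fun k => ∑ s, ν s * KL (π k s) (πstar s) with hD
  set δ : ℕ → ℝ := fun k => (∑ s, ν s * V (π k) s) - (∑ s, ν s * V πstar s) with hδ
  have hst : ∀ x : S → ℝ, ∑ s, ν s * ∑ s', (∑ a, πstar s a * P s a s') * x s'
      = ∑ s, ν s * x s := by
    intro x
    simp_rw [Finset.mul_sum]
    rw [Finset.sum_comm]
    apply Finset.sum_congr rfl
    intro s' _
    rw [← hstat s', Finset.sum_mul]
    exact Finset.sum_congr rfl fun _ _ => by ring
  have hrec : ∀ k, η * (δ (k+1) - γ * δ k) + D (k+1) ≤ D k := by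
    intro k
    have h1 : ∑ s, ν s * (η * (V (π (k+1)) s - V πstar s - γ * (∑ s', (∑ a, πstar s a * P s a s') *
      (V (π k) s' - V πstar s'))) + KL (π (k+1) s) (πstar s)) ≤ D k :=
      Finset.sum_le_sum fun s _ => mul_le_mul_of_nonneg_left (hpt k s) (hν0 s)
    refine le_trans (le_of_eq ?_) h1
    simp only [hδ, hD]
    rw [← hdiff, ← hdiff, ← hst (fun s => V (π k) s - V πstar s), Finset.mul_sum _ _ γ,
      ← Finset.sum_sub_distrib, Finset.mul_sum _ _ η, ← Finset.sum_add_distrib]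
    exact Finset.sum_congr rfl fun _ _ => by ring
  have hδm : ∀ k, δ (k+1) ≤ δ k := by
    intro k
    have : ∑ s, ν s * V (π (k+1)) s ≤ ∑ s, ν s * V (π k) s :=
      Finset.sum_le_sum fun s _ => mul_le_mul_of_nonneg_left (hmono k s) (hν0 s)
    simp only [hδ]
    linarith
  have hδ0 : ∀ k, 0 ≤ δ k := by
    intro k
    have : ∑ s, ν s * V πstar s ≤ ∑ s, ν s * V (π k) s :=
      Finset.sum_le_sum fun s _ => mul_le_mul_of_nonneg_left (hopt _ (hpol k) s) (hν0 s)
    simp only [hδ]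
    linarith
  have hDn : ∀ k, 0 ≤ D k := fun k => Finset.sum_nonneg fun s _ =>
    mul_nonneg (hν0 s) (KL_nonneg' _ _ (hpol k s) (hπstar s) (hpos k s))
  have hD0 : D 0 ≤ Real.log (Fintype.card A) := by
    have : D 0 ≤ ∑ s, ν s * Real.log (Fintype.card A) :=
      Finset.sum_le_sum fun s _ =>
        mul_le_mul_of_nonneg_left (KL_unif _ _ (hπstar s) (hunif s)) (hν0 s)
    rwa [← Finset.sum_mul, hν1, one_mul] at this
  have hinv : ∀ k : ℕ, η * (1 - γ) * k * δ k + η * γ * δ k + D k ≤ η * γ * δ 0 + D 0 := by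
    intro k
    induction k with
    | zero => simp
    | succ k ih =>
      have h1 := hrec k
      have h2 : η * (1 - γ) * k * δ (k+1) ≤ η * (1 - γ) * k * δ k := by
        apply mul_le_mul_of_nonneg_left (hδm k)
        have : 0 < 1 - γ := by linarith
        positivity
      push_cast
      linarith
  intro k
  have hden : 0 < η * (1 - γ) * ((k : ℝ) + 1) := by
    have : 0 < 1 - γ := by linarith
    positivity
  change δ (k+1) ≤ (η * γ * δ 0 + Real.log (Fintype.card A)) / (η * (1 - γ) * (k + 1))
  rw [le_div_iff₀ hden]
  have h1 := hinv (k+1)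
  push_cast at h1
  have h2 := hDn (k+1)
  have h3 : 0 ≤ η * γ * δ (k+1) := mul_nonneg (by positivity) (hδ0 _)
  linarith

end RL
end
end

section
/- (Generalized monotonicity for perturbed value functions.) Let π* be an optimal policy and ν* a stationary distribution of P^{π*}. Then for every policy π and every τ ≥ 0: Σ_s ν*(s) [ ⟨Q_τ^π(s,·), π(·|s) − π*(·|s)⟩ + h^π(s) − h^{π*}(s) + τ(D_{π_0}^π(s) − D_{π_0}^{π*}(s)) ] = (1−γ) Σ_s ν*(s) ( V_τ^π(s) − V_τ^{π*}(s) ). -/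
open Finset

noncomputable section

namespace RL

/-- generalized monotonicity for perturbed value functions: for
an optimal policy `π*` with stationary distribution `ν*`, every policy `π` and
every `τ ≥ 0`:
`∑_s ν*(s) [⟨Q_τ^π(s,·), π(·|s) - π*(·|s)⟩ + h^π(s) - h^{π*}(s)
  + τ(D_{π_0}^π(s) - D_{π_0}^{π*}(s))] = (1-γ) ∑_s ν*(s) (V_τ^π(s) - V_τ^{π*}(s))`. -/
theorem generalized_monotonicity_perturbed {S A : Type*} [Fintype S] [Fintype A]
    [Nonempty S] [Nonempty A]
    (P : S → A → S → ℝ) (hP0 : ∀ s a s', 0 ≤ P s a s')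
    (hP1 : ∀ s a, ∑ s', P s a s' = 1)
    (c : S → A → ℝ) (γ : ℝ) (hγ0 : 0 < γ) (hγ1 : γ < 1)
    (h : S → (A → ℝ) → ℝ)
    (π0 : S → A → ℝ) (hπ0 : IsPolicy π0) (hπ0pos : ∀ s a, 0 < π0 s a)
    (V : ℝ → (S → A → ℝ) → S → ℝ)
    (hV : ∀ τ : ℝ, 0 ≤ τ → ∀ w : S → A → ℝ, IsPolicy w →
      IsValue P c (fun s p => h s p + τ * KL (π0 s) p) γ w (V τ w))
    (πstar : S → A → ℝ) (hπstar : IsPolicy πstar)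
    (hopt : ∀ w : S → A → ℝ, IsPolicy w → ∀ s, V 0 πstar s ≤ V 0 w s)
    (ν : S → ℝ) (hν0 : ∀ s, 0 ≤ ν s) (hν1 : ∑ s, ν s = 1)
    (hstat : ∀ s', ∑ s, ν s * (∑ a, πstar s a * P s a s') = ν s')
    (π : S → A → ℝ) (hπ : IsPolicy π) (τ : ℝ) (hτ : 0 ≤ τ) :
    ∑ s, ν s *
        ((∑ a, Qfun P c (fun s' p => h s' p + τ * KL (π0 s') p) γ π (V τ π) s a
            * (π s a - πstar s a))
          + (h s (π s) - h s (πstar s))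
          + τ * (KL (π0 s) (π s) - KL (π0 s) (πstar s)))
      = (1 - γ) * ∑ s, ν s * (V τ π s - V τ πstar s) := by
  have hswap : ∀ (w : S → A → ℝ) (U : S → ℝ) (s : S),
      ∑ s', (∑ a, w s a * P s a s') * U s' = ∑ a, w s a * ∑ s', P s a s' * U s' := by
    intro w U s
    simp only [Finset.sum_mul, Finset.mul_sum]
    rw [Finset.sum_comm]
    exact Finset.sum_congr rfl fun a _ => Finset.sum_congr rfl fun s' _ => by ring
  have hQ : ∀ (w : S → A → ℝ), IsPolicy w → ∀ s,
      ∑ a, Qfun P c (fun s' p => h s' p + τ * KL (π0 s') p) γ π (V τ π) s a * w s a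
        = (∑ a, w s a * c s a) + (h s (π s) + τ * KL (π0 s) (π s))
          + γ * ∑ s', (∑ a, w s a * P s a s') * V τ π s' := by
    intro w hw s
    have h1 := (hw s).2
    rw [hswap]
    have e : h s (π s) + τ * KL (π0 s) (π s)
        = ∑ a, w s a * (h s (π s) + τ * KL (π0 s) (π s)) := by
      rw [← Finset.sum_mul, h1, one_mul]
    rw [e, Finset.mul_sum, ← Finset.sum_add_distrib, ← Finset.sum_add_distrib]
    refine Finset.sum_congr rfl fun a _ => ?_
    simp only [Qfun]
    ring
  have key : ∀ s,
      ((∑ a, Qfun P c (fun s' p => h s' p + τ * KL (π0 s') p) γ π (V τ π) s a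
            * (π s a - πstar s a))
          + (h s (π s) - h s (πstar s))
          + τ * (KL (π0 s) (π s) - KL (π0 s) (πstar s)))
      = (V τ π s - V τ πstar s)
        - γ * ∑ s', (∑ a, πstar s a * P s a s') * (V τ π s' - V τ πstar s') := by
    intro s
    have h1 := hV τ hτ π hπ s
    have h2 := hV τ hτ πstar hπstar s
    have h3 := hQ π hπ s
    have h4 := hQ πstar hπstar s
    simp only [mul_sub, Finset.sum_sub_distrib] at *
    linarith
  have hst : ∀ U : S → ℝ,
      ∑ s, ν s * ∑ s', (∑ a, πstar s a * P s a s') * U s' = ∑ s, ν s * U s := by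
    intro U
    simp only [Finset.mul_sum]
    rw [Finset.sum_comm]
    refine Finset.sum_congr rfl fun s' _ => ?_
    rw [← hstat s', Finset.sum_mul]
    exact Finset.sum_congr rfl fun s _ => by ring
  have hst' := hst (fun s => V τ π s - V τ πstar s)
  simp only [key]
  simp only [mul_sub (ν _) (V τ π _ - V τ πstar _) (γ * _), Finset.sum_sub_distrib]
  have e : ∑ s, ν s * (γ * ∑ s', (∑ a, πstar s a * P s a s') * (V τ π s' - V τ πstar s'))
      = γ * ∑ s, ν s * (V τ π s - V τ πstar s) := by
    rw [← hst', Finset.mul_sum]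
    exact Finset.sum_congr rfl fun s _ => by ring
  rw [e]
  ring

end RL
end
end

section
/- Consider the APMD iteration: given a policy π_k with full support, τ_k ≥ 0, η_k > 0, set π_{k+1}(·|s) = argmin_{p∈Δ_A} { η_k[⟨Q_{τ_k}^{π_k}(s,·), p⟩ + h^p(s) + τ_k D_{π_0}^p(s)] + D_{π_k}^p(s) } for every s. Then for every s ∈ S: ⟨Q_{τ_k}^{π_k}(s,·), π_{k+1}(·|s) − π_k(·|s)⟩ + h^{π_{k+1}}(s) − h^{π_k}(s) + τ_k[D_{π_0}^{π_{k+1}}(s) − D_{π_0}^{π_k}(s)] ≥ V_{τ_k}^{π_{k+1}}(s) − V_{τ_k}^{π_k}(s). -/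
open Finset

noncomputable section

namespace RL

theorem KL_nonneg_aux {A : Type*} [Fintype A] (q p : A → ℝ) (hq : q ∈ simplex A)
    (hqpos : ∀ a, 0 < q a) (hp : p ∈ simplex A) : 0 ≤ KL q p := by
  have h1 : ∑ a, (p a - q a) ≤ KL q p := by
    unfold KL
    refine Finset.sum_le_sum fun a _ => ?_
    rcases (hp.1 a).eq_or_lt with h0 | h0
    · rw [← h0]; simp; exact (hqpos a).le
    · have h2 := Real.one_sub_inv_le_log_of_pos (div_pos h0 (hqpos a))
      have h3 := mul_le_mul_of_nonneg_left h2 h0.le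
      have h4 : p a * (1 - (p a / q a)⁻¹) = p a - q a := by
        have := h0.ne'
        field_simp
      linarith
  rw [Finset.sum_sub_distrib, hp.2, hq.2] at h1
  linarith

theorem KL_self_aux {A : Type*} [Fintype A] (q : A → ℝ)
    (hqpos : ∀ a, 0 < q a) : KL q q = 0 := by
  unfold KL
  refine Finset.sum_eq_zero fun a _ => ?_
  rw [div_self (hqpos a).ne']; simp

theorem Q_sum_aux {S A : Type*} [Fintype S] [Fintype A] (P : S → A → S → ℝ)
    (c : S → A → ℝ) (h : S → (A → ℝ) → ℝ) (γ : ℝ) (π : S → A → ℝ) (V : S → ℝ)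
    (s : S) (p : A → ℝ) (hp : p ∈ simplex A) :
    ∑ a, Qfun P c h γ π V s a * p a =
      (∑ a, p a * c s a) + h s (π s) + γ * ∑ s', (∑ a, p a * P s a s') * V s' := by
  have e : ∑ s', (∑ a, p a * P s a s') * V s' = ∑ a, p a * ∑ s', P s a s' * V s' := by
    simp_rw [Finset.sum_mul, Finset.mul_sum]
    rw [Finset.sum_comm]
    simp_rw [mul_assoc]
  rw [e]
  have e2 : h s (π s) = ∑ a, p a * h s (π s) := by
    rw [← Finset.sum_mul, hp.2, one_mul]
  nth_rewrite 1 [e2]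
  rw [Finset.mul_sum, ← Finset.sum_add_distrib, ← Finset.sum_add_distrib]
  refine Finset.sum_congr rfl fun a _ => ?_
  unfold Qfun
  ring

/-- one step of the APMD method, where `π_{k+1}(·|s)` minimizes
`p ↦ η_k [⟨Q_{τ_k}^{π_k}(s,·), p⟩ + h^p(s) + τ_k D_{π_0}^p(s)] + D_{π_k}^p(s)`
over the simplex, satisfies for every state `s`:
`⟨Q_{τ_k}^{π_k}(s,·), π_{k+1}(·|s) - π_k(·|s)⟩ + h^{π_{k+1}}(s) - h^{π_k}(s)
  + τ_k [D_{π_0}^{π_{k+1}}(s) - D_{π_0}^{π_k}(s)]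
  ≥ V_{τ_k}^{π_{k+1}}(s) - V_{τ_k}^{π_k}(s)`. -/
theorem apmd_one_step {S A : Type*} [Fintype S] [Fintype A]
    [Nonempty S] [Nonempty A]
    (P : S → A → S → ℝ) (hP0 : ∀ s a s', 0 ≤ P s a s')
    (hP1 : ∀ s a, ∑ s', P s a s' = 1)
    (c : S → A → ℝ) (γ : ℝ) (hγ0 : 0 < γ) (hγ1 : γ < 1)
    (h : S → (A → ℝ) → ℝ) (h' : S → (A → ℝ) → A → ℝ)
    (hconv : ConvexReg h h' 0)
    (π0 : S → A → ℝ) (hπ0 : IsPolicy π0) (hπ0pos : ∀ s a, 0 < π0 s a)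
    (τk : ℝ) (hτk : 0 ≤ τk) (ηk : ℝ) (hηk : 0 < ηk)
    (πk : S → A → ℝ) (hπk : IsPolicy πk) (hπkpos : ∀ s a, 0 < πk s a)
    (πk1 : S → A → ℝ)
    (Vk Vk1 : S → ℝ)
    (hVk : IsValue P c (fun s p => h s p + τk * KL (π0 s) p) γ πk Vk)
    (hVk1 : IsValue P c (fun s p => h s p + τk * KL (π0 s) p) γ πk1 Vk1)
    (hstep : ∀ s, IsProxStep
      (Qfun P c (fun s' p => h s' p + τk * KL (π0 s') p) γ πk Vk s)
      (fun p => h s p + τk * KL (π0 s) p) ηk (πk s) (πk1 s)) :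
    ∀ s, Vk1 s - Vk s ≤
      (∑ a, Qfun P c (fun s' p => h s' p + τk * KL (π0 s') p) γ πk Vk s a
          * (πk1 s a - πk s a))
        + (h s (πk1 s) - h s (πk s))
        + τk * (KL (π0 s) (πk1 s) - KL (π0 s) (πk s)) := by
  set H : S → (A → ℝ) → ℝ := fun s p => h s p + τk * KL (π0 s) p with hH
  set g : S → ℝ := fun s => (∑ a, Qfun P c H γ πk Vk s a * πk1 s a)
    - (∑ a, Qfun P c H γ πk Vk s a * πk s a) + H s (πk1 s) - H s (πk s) with hg
  have hpol : IsPolicy πk1 := fun s => (hstep s).1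
  have hg0 : ∀ s, g s ≤ 0 := by
    intro s
    have h1 := (hstep s).2 (πk s) (hπk s)
    rw [KL_self_aux _ (hπkpos s)] at h1
    have h2 := KL_nonneg_aux _ _ (hπk s) (hπkpos s) (hpol s)
    change ηk * ((∑ a, Qfun P c H γ πk Vk s a * πk1 s a) + H s (πk1 s)) + _ ≤
      ηk * ((∑ a, Qfun P c H γ πk Vk s a * πk s a) + H s (πk s)) + 0 at h1
    have h3 : ηk * g s ≤ 0 := by simp only [hg]; linarith
    by_contra hc
    push Not at hc
    have := mul_pos hηk hc
    linarith
  set M : S → S → ℝ := fun s s' => ∑ a, πk1 s a * P s a s' with hM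
  have hM0 : ∀ s s', 0 ≤ M s s' := fun s s' =>
    Finset.sum_nonneg fun a _ => mul_nonneg ((hpol s).1 a) (hP0 s a s')
  have hM1 : ∀ s, ∑ s', M s s' = 1 := by
    intro s
    simp only [hM]
    rw [Finset.sum_comm]
    simp_rw [← Finset.mul_sum, hP1, mul_one]
    exact (hpol s).2
  have hrec : ∀ s, Vk1 s - Vk s = g s + γ * ∑ s', M s s' * (Vk1 s' - Vk s') := by
    intro s
    have e1 := hVk s
    have e2 := hVk1 s
    have e3 := Q_sum_aux P c H γ πk Vk s (πk s) (hπk s)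
    have e4 := Q_sum_aux P c H γ πk Vk s (πk1 s) (hpol s)
    have e5 : ∑ s', M s s' * (Vk1 s' - Vk s') =
        ∑ s', M s s' * Vk1 s' - ∑ s', M s s' * Vk s' := by
      simp_rw [mul_sub]; rw [Finset.sum_sub_distrib]
    rw [e5]
    simp only [hg, hM]
    rw [e3, e4]
    linarith
  obtain ⟨m, hm⟩ := Finite.exists_max (fun s => Vk1 s - Vk s)
  have hm0 : Vk1 m - Vk m ≤ 0 := by
    have h1 : ∑ s', M m s' * (Vk1 s' - Vk s') ≤ Vk1 m - Vk m := by
      calc _ ≤ ∑ s', M m s' * (Vk1 m - Vk m) :=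
            Finset.sum_le_sum fun s' _ => mul_le_mul_of_nonneg_left (hm s') (hM0 m s')
        _ = _ := by rw [← Finset.sum_mul, hM1, one_mul]
    have h2 := mul_le_mul_of_nonneg_left h1 hγ0.le
    have h3 := hrec m
    have h4 := hg0 m
    nlinarith
  intro s
  have h1 : ∑ s', M s s' * (Vk1 s' - Vk s') ≤ 0 :=
    Finset.sum_nonpos fun s' _ =>
      mul_nonpos_of_nonneg_of_nonpos (hM0 s s') ((hm s').trans hm0)
  have h2 := mul_nonpos_of_nonneg_of_nonpos hγ0.le h1
  have h3 := hrec s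
  simp_rw [mul_sub]
  rw [Finset.sum_sub_distrib]
  simp only [hg, hH] at h3
  linarith

end RL
end
end

section
/- (Linear convergence of APMD with geometrically decaying perturbation.) Let (π_k) be APMD iterates with π_0 the uniform policy, τ_k = τ_0 γ^k for some τ_0 ≥ 0, and stepsizes η_k with 1 + η_k τ_k = 1/γ, where π_{k+1}(·|s) = argmin_{p∈Δ_A}{ η_k[⟨Q_{τ_k}^{π_k}(s,·), p⟩ + h^p(s) + τ_k D_{π_0}^p(s)] + D_{π_k}^p(s) } for each s. Then for every k ≥ 0: f(π_k) − f(π*) ≤ γ^k [ f(π_0) − f(π*) + τ_0 ( 2/(1−γ) + k/γ ) log|A| ]. -/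
open Finset

noncomputable section

namespace RL

section aux
variable {S A : Type*} [Fintype S] [Fintype A]

lemma aux_klsplit (q p : A → ℝ) (hq : ∀ a, 0 < q a) :
    KL q p = ∑ a, p a * Real.log (p a) - ∑ a, p a * Real.log (q a) := by
  unfold KL
  rw [← Finset.sum_sub_distrib]
  refine Finset.sum_congr rfl fun a _ => ?_
  by_cases hp : p a = 0
  · simp [hp]
  · rw [Real.log_div hp (hq a).ne']; ring

lemma aux_klnonneg (q p : A → ℝ) (hq : ∀ a, 0 < q a) (hq1 : ∑ a, q a = 1)
    (hp : p ∈ simplex A) : 0 ≤ KL q p := by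
  have : ∑ a, (p a - q a) ≤ KL q p := by
    refine Finset.sum_le_sum fun a _ => ?_
    rcases (hp.1 a).eq_or_lt with h0 | h0
    · simp [← h0, (hq a).le]
    · have h1 := Real.one_sub_inv_le_log_of_pos (div_pos h0 (hq a))
      have h2 := mul_le_mul_of_nonneg_left h1 h0.le
      have h3 : p a * (1 - (p a / q a)⁻¹) = p a - q a := by
        field_simp
      linarith
  rw [Finset.sum_sub_distrib, hp.2, hq1] at this
  linarith

lemma aux_klunif (q p : A → ℝ) (hq : ∀ a, q a = 1 / (Fintype.card A : ℝ)) [Nonempty A]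
    (hp : p ∈ simplex A) : KL q p ≤ Real.log (Fintype.card A) := by
  have hc : (0:ℝ) < Fintype.card A := by exact_mod_cast Fintype.card_pos
  rw [aux_klsplit q p (fun a => by rw [hq]; positivity)]
  have h1 : ∑ a, p a * Real.log (p a) ≤ 0 := by
    refine Finset.sum_nonpos fun a _ => ?_
    refine mul_nonpos_of_nonneg_of_nonpos (hp.1 a) (Real.log_nonpos (hp.1 a) ?_)
    rw [← hp.2]
    exact Finset.single_le_sum (fun i _ => hp.1 i) (Finset.mem_univ a)
  have h2 : ∑ a, p a * Real.log (q a) = - Real.log (Fintype.card A) := by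
    simp only [hq, one_div, Real.log_inv]
    rw [← Finset.sum_mul, hp.2, one_mul]
  linarith

lemma aux_three (φ : (A → ℝ) → ℝ) (β : ℝ) (hβ : 0 ≤ β) (x : A → ℝ) (hx : x ∈ simplex A)
    (hx0 : ∀ a, 0 < x a)
    (hφ : ∀ p ∈ simplex A, ∀ t : ℝ, 0 < t → t < 1 →
      φ (fun a => (1 - t) * x a + t * p a) ≤ (1 - t) * φ x + t * φ p)
    (hmin : ∀ p ∈ simplex A, φ x + β * ∑ a, x a * Real.log (x a)
      ≤ φ p + β * ∑ a, p a * Real.log (p a))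
    (p : A → ℝ) (hp : p ∈ simplex A) :
    φ x + β * (∑ a, x a * Real.log (x a)) + β * KL x p
      ≤ φ p + β * ∑ a, p a * Real.log (p a) := by
  have key : ∀ t : ℝ, 0 < t → t < 1 →
      0 ≤ φ p - φ x + β * ∑ a, (p a - x a) * Real.log ((1 - t) * x a + t * p a) := by
    intro t ht0 ht1
    set y : A → ℝ := fun a => (1 - t) * x a + t * p a with hy
    have hy0 : ∀ a, 0 < y a := fun a => by
      have := mul_pos (sub_pos.2 ht1) (hx0 a)
      have := mul_nonneg ht0.le (hp.1 a)
      simp only [hy]; linarith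
    have hy1 : y ∈ simplex A := by
      refine ⟨fun a => (hy0 a).le, ?_⟩
      simp only [hy]
      rw [Finset.sum_add_distrib, ← Finset.mul_sum, ← Finset.mul_sum, hx.2, hp.2]; ring
    have h1 := hφ p hp t ht0 ht1
    have h2 := hmin y hy1
    have h3 := aux_klnonneg y x hy0 hy1.2 hx
    rw [aux_klsplit y x hy0] at h3
    have h4 : ∑ a, y a * Real.log (y a) - ∑ a, x a * Real.log (y a)
        = t * ∑ a, (p a - x a) * Real.log (y a) := by
      rw [← Finset.sum_sub_distrib, Finset.mul_sum]
      refine Finset.sum_congr rfl fun a _ => ?_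
      simp only [hy]; ring
    have h5 : β * (∑ a, y a * Real.log (y a) - ∑ a, x a * Real.log (x a))
        ≤ β * (t * ∑ a, (p a - x a) * Real.log (y a)) :=
      mul_le_mul_of_nonneg_left (by linarith) hβ
    have h6 : 0 ≤ t * (φ p - φ x + β * ∑ a, (p a - x a) * Real.log (y a)) := by
      change φ y ≤ _ at h1
      nlinarith
    exact nonneg_of_mul_nonneg_right h6 ht0
  have hcont : Filter.Tendsto (fun t : ℝ =>
      φ p - φ x + β * ∑ a, (p a - x a) * Real.log ((1 - t) * x a + t * p a))
      (nhdsWithin 0 (Set.Ioi 0))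
      (nhds (φ p - φ x + β * ∑ a, (p a - x a) * Real.log ((1 - 0) * x a + 0 * p a))) := by
    refine Filter.Tendsto.mono_left (ContinuousAt.tendsto (x := (0:ℝ)) ?_) nhdsWithin_le_nhds
    have : ∀ a, ContinuousAt (fun t : ℝ =>
        (p a - x a) * Real.log ((1 - t) * x a + t * p a)) 0 := by
      intro a
      refine ContinuousAt.mul continuousAt_const (ContinuousAt.log (by fun_prop) ?_)
      have := (hx0 a).ne'
      simpa using this
    refine ContinuousAt.add continuousAt_const (ContinuousAt.mul continuousAt_const ?_)
    exact tendsto_finsetSum _ fun a _ => this a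
  have h0 := ge_of_tendsto hcont (by
    filter_upwards [Ioo_mem_nhdsGT (show (0:ℝ) < 1 by norm_num)] with t ht
    exact key t ht.1 ht.2)
  rw [aux_klsplit x p hx0]
  have h7 : ∑ a, (p a - x a) * Real.log ((1 - 0) * x a + 0 * p a)
      = ∑ a, p a * Real.log (x a) - ∑ a, x a * Real.log (x a) := by
    rw [← Finset.sum_sub_distrib]
    refine Finset.sum_congr rfl fun a _ => ?_
    rw [show (1 - 0) * x a + 0 * p a = x a by ring]; ring
  rw [h7] at h0
  nlinarith

lemma aux_prox (G : A → ℝ) (h : (A → ℝ) → ℝ) (h' : (A → ℝ) → A → ℝ)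
    (hc : ∀ p ∈ simplex A, ∀ q ∈ simplex A, 0 ≤ h p - (h q + ∑ a, h' q a * (p a - q a)))
    (η τ : ℝ) (hη : 0 ≤ η) (hτ : 0 ≤ τ) (u b x : A → ℝ) (hu : ∀ a, 0 < u a)
    (hb : ∀ a, 0 < b a) (hx0 : ∀ a, 0 < x a)
    (hs : IsProxStep G (fun p => h p + τ * KL u p) η b x) (p : A → ℝ) (hp : p ∈ simplex A) :
    η * ((∑ a, G a * x a) + (h x + τ * KL u x)) + KL b x + (1 + η * τ) * KL x p
      ≤ η * ((∑ a, G a * p a) + (h p + τ * KL u p)) + KL b p := by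
  obtain ⟨hx, hm⟩ := hs
  have e : ∀ p : A → ℝ, η * ((∑ a, G a * p a) + (h p + τ * KL u p)) + KL b p
      = (η * ((∑ a, G a * p a) + h p) - η * τ * (∑ a, p a * Real.log (u a))
        - ∑ a, p a * Real.log (b a)) + (1 + η * τ) * ∑ a, p a * Real.log (p a) := by
    intro p
    rw [aux_klsplit u p hu, aux_klsplit b p hb]; ring
  have := aux_three (fun p => η * ((∑ a, G a * p a) + h p)
    - η * τ * (∑ a, p a * Real.log (u a)) - ∑ a, p a * Real.log (b a)) (1 + η * τ)
    (by positivity) x hx hx0 ?_ ?_ p hp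
  · rw [e, e]; exact this
  · intro p hp t ht0 ht1
    set y : A → ℝ := fun a => (1 - t) * x a + t * p a with hy
    have hy1 : y ∈ simplex A := by
      refine ⟨fun a => ?_, ?_⟩
      · have := mul_pos (sub_pos.2 ht1) (hx0 a)
        have := mul_nonneg ht0.le (hp.1 a)
        simp only [hy]; linarith
      · simp only [hy]
        rw [Finset.sum_add_distrib, ← Finset.mul_sum, ← Finset.mul_sum, hx.2, hp.2]; ring
    have lin : ∀ g : A → ℝ, ∑ a, y a * g a
        = (1 - t) * (∑ a, x a * g a) + t * ∑ a, p a * g a := by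
      intro g
      rw [Finset.mul_sum, Finset.mul_sum, ← Finset.sum_add_distrib]
      refine Finset.sum_congr rfl fun a _ => ?_
      simp only [hy]; ring
    have hh : h y ≤ (1 - t) * h x + t * h p := by
      have a1 := hc x hx y hy1
      have a2 := hc p hp y hy1
      have a3 : (1 - t) * (∑ a, h' y a * (x a - y a)) + t * (∑ a, h' y a * (p a - y a)) = 0 := by
        rw [Finset.mul_sum, Finset.mul_sum, ← Finset.sum_add_distrib]
        refine Finset.sum_eq_zero fun a _ => ?_
        simp only [hy]; ring
      have a4 := mul_nonneg (sub_pos.2 ht1).le a1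
      have a5 := mul_nonneg ht0.le a2
      nlinarith
    have hg := lin G
    have e3 : ∀ z : A → ℝ, ∑ a, G a * z a = ∑ a, z a * G a := fun z =>
      Finset.sum_congr rfl fun a _ => mul_comm _ _
    simp only [e3]
    rw [lin G, lin (fun a => Real.log (u a)), lin (fun a => Real.log (b a))]
    have := mul_le_mul_of_nonneg_left hh hη
    nlinarith
  · intro p hp
    have := hm p hp
    simp only at this
    rw [e, e] at this
    exact this

lemma aux_max [Nonempty S] (M : S → S → ℝ) (hM0 : ∀ s s', 0 ≤ M s s')
    (hM1 : ∀ s, ∑ s', M s s' = 1) (γ : ℝ) (hγ0 : 0 < γ) (hγ1 : γ < 1) (B : ℝ) (W : S → ℝ)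
    (hW : ∀ s, W s ≤ B + γ * ∑ s', M s s' * W s') (s : S) : W s ≤ B / (1 - γ) := by
  obtain ⟨m, hm⟩ := Finite.exists_max W
  refine (hm s).trans ?_
  rw [le_div_iff₀ (by linarith)]
  have h1 : ∑ s', M m s' * W s' ≤ W m := by
    calc _ ≤ ∑ s', M m s' * W m :=
          Finset.sum_le_sum fun i _ => mul_le_mul_of_nonneg_left (hm i) (hM0 m i)
      _ = W m := by rw [← Finset.sum_mul, hM1, one_mul]
  have := hW m
  nlinarith

lemma aux_P (P : S → A → S → ℝ) (hP0 : ∀ s a s', 0 ≤ P s a s')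
    (hP1 : ∀ s a, ∑ s', P s a s' = 1) (w : S → A → ℝ) (hw : IsPolicy w) :
    (∀ s s', 0 ≤ ∑ a, w s a * P s a s') ∧ ∀ s, ∑ s', ∑ a, w s a * P s a s' = 1 := by
  refine ⟨fun s s' => Finset.sum_nonneg fun a _ => mul_nonneg ((hw s).1 a) (hP0 s a s'),
    fun s => ?_⟩
  rw [Finset.sum_comm]
  simp only [← Finset.mul_sum, hP1, mul_one]
  exact (hw s).2

lemma aux_Q (P : S → A → S → ℝ) (c : S → A → ℝ) (h : S → (A → ℝ) → ℝ) (γ : ℝ)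
    (π w : S → A → ℝ) (hw : IsPolicy w) (V : S → ℝ) (s : S) :
    ∑ a, Qfun P c h γ π V s a * w s a = (∑ a, w s a * c s a) + h s (π s)
      + γ * ∑ s', (∑ a, w s a * P s a s') * V s' := by
  have e : ∑ s', (∑ a, w s a * P s a s') * V s' = ∑ a, w s a * ∑ s', P s a s' * V s' := by
    simp only [Finset.sum_mul, Finset.mul_sum]
    rw [Finset.sum_comm]
    simp only [mul_assoc]
  rw [e]
  have : h s (π s) = ∑ a, w s a * h s (π s) := by rw [← Finset.sum_mul, (hw s).2, one_mul]
  rw [this, Finset.mul_sum, ← Finset.sum_add_distrib, ← Finset.sum_add_distrib]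
  refine Finset.sum_congr rfl fun a _ => ?_
  unfold Qfun; ring

end aux

/-- linear convergence of APMD with geometrically decaying
perturbation: with `τ_k = τ_0 γ^k` and `1 + η_k τ_k = 1/γ`, for every `k`:
`f(π_k) - f(π*) ≤ γ^k [f(π_0) - f(π*) + τ_0 (2/(1-γ) + k/γ) log|A|]`. -/
theorem apmd_linear_convergence_geometric {S A : Type*} [Fintype S] [Fintype A]
    [Nonempty S] [Nonempty A]
    (P : S → A → S → ℝ) (hP0 : ∀ s a s', 0 ≤ P s a s')
    (hP1 : ∀ s a, ∑ s', P s a s' = 1)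
    (c : S → A → ℝ) (γ : ℝ) (hγ0 : 0 < γ) (hγ1 : γ < 1)
    (h : S → (A → ℝ) → ℝ) (h' : S → (A → ℝ) → A → ℝ)
    (hconv : ConvexReg h h' 0)
    (π : ℕ → S → A → ℝ)
    (hunif : ∀ s a, π 0 s a = 1 / (Fintype.card A : ℝ))
    (hpol : ∀ k, IsPolicy (π k)) (hpos : ∀ k s a, 0 < π k s a)
    (V : ℝ → (S → A → ℝ) → S → ℝ)
    (hV : ∀ τ' : ℝ, 0 ≤ τ' → ∀ w : S → A → ℝ, IsPolicy w →
      IsValue P c (fun s p => h s p + τ' * KL (π 0 s) p) γ w (V τ' w))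
    (πstar : S → A → ℝ) (hπstar : IsPolicy πstar)
    (hopt : ∀ w : S → A → ℝ, IsPolicy w → ∀ s, V 0 πstar s ≤ V 0 w s)
    (ν : S → ℝ) (hν0 : ∀ s, 0 ≤ ν s) (hν1 : ∑ s, ν s = 1)
    (hstat : ∀ s', ∑ s, ν s * (∑ a, πstar s a * P s a s') = ν s')
    (τ0 : ℝ) (hτ0 : 0 ≤ τ0)
    (τ η : ℕ → ℝ) (hτ : ∀ k, τ k = τ0 * γ ^ k)
    (hη : ∀ k, 1 + η k * τ k = 1 / γ)
    (hstep : ∀ k s, IsProxStep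
      (Qfun P c (fun s' p => h s' p + τ k * KL (π 0 s') p) γ (π k)
        (V (τ k) (π k)) s)
      (fun p => h s p + τ k * KL (π 0 s) p) (η k) (π k s) (π (k+1) s)) :
    ∀ k : ℕ,
      (∑ s, ν s * V 0 (π k) s) - (∑ s, ν s * V 0 πstar s)
        ≤ γ ^ k * ((∑ s, ν s * V 0 (π 0) s) - (∑ s, ν s * V 0 πstar s)
          + τ0 * (2 / (1 - γ) + k / γ) * Real.log (Fintype.card A)) := by
  classical
  have hτ0' : 0 < τ0 := by
    rcases hτ0.eq_or_lt with h0 | h0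
    · exfalso
      have := hη 0
      rw [hτ, ← h0] at this
      have h2 : 1 < 1 / γ := by rw [lt_div_iff₀ hγ0]; linarith
      linarith
    · exact h0
  have hτp : ∀ k, 0 < τ k := fun k => by rw [hτ]; positivity
  have hg : 0 < 1 - γ := by linarith
  have hητ : ∀ k, η k * τ k * γ = 1 - γ := fun k => by
    have := hη k
    rw [eq_div_iff hγ0.ne'] at this
    linarith
  have hηp : ∀ k, 0 < η k := fun k => by
    have h1 := hητ k
    have h2 : 0 < η k * (τ k * γ) := by rw [← mul_assoc, h1]; exact hg
    exact pos_of_mul_pos_left h2 (mul_pos (hτp k) hγ0).le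
  set L := Real.log (Fintype.card A) with hL
  have hL0 : 0 ≤ L := Real.log_natCast_nonneg _
  have hD0 : ∀ k s p, p ∈ simplex A → 0 ≤ KL (π k s) p := fun k s p hp =>
    aux_klnonneg _ _ (hpos k s) (hpol k s).2 hp
  have hDL : ∀ s p, p ∈ simplex A → KL (π 0 s) p ≤ L := fun s p hp =>
    aux_klunif _ _ (hunif s) hp
  -- perturbation comparison
  have hdiff : ∀ τ1 τ2 : ℝ, 0 ≤ τ1 → 0 ≤ τ2 → ∀ w, IsPolicy w → ∀ s,
      V τ2 w s - V τ1 w s = (τ2 - τ1) * KL (π 0 s) (w s)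
        + γ * ∑ s', (∑ a, w s a * P s a s') * (V τ2 w s' - V τ1 w s') := by
    intro τ1 τ2 h1 h2 w hw s
    have e1 := hV τ1 h1 w hw s
    have e2 := hV τ2 h2 w hw s
    simp only at e1 e2
    simp only [mul_sub, Finset.sum_sub_distrib]
    linear_combination e2 - e1
  have hup : ∀ τ1 τ2 : ℝ, 0 ≤ τ1 → τ1 ≤ τ2 → ∀ w, IsPolicy w → ∀ s,
      V τ2 w s - V τ1 w s ≤ (τ2 - τ1) * L / (1 - γ) := by
    intro τ1 τ2 h1 h2 w hw
    obtain ⟨m0, m1⟩ := aux_P P hP0 hP1 w hw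
    refine aux_max _ m0 m1 γ hγ0 hγ1 _ _ fun s => ?_
    rw [hdiff τ1 τ2 h1 (h1.trans h2) w hw s]
    have := mul_le_mul_of_nonneg_left (hDL s _ (hw s)) (sub_nonneg.2 h2)
    linarith
  have hdown : ∀ τ1 τ2 : ℝ, 0 ≤ τ1 → τ1 ≤ τ2 → ∀ w, IsPolicy w → ∀ s,
      V τ1 w s - V τ2 w s ≤ 0 := by
    intro τ1 τ2 h1 h2 w hw s
    obtain ⟨m0, m1⟩ := aux_P P hP0 hP1 w hw
    have := aux_max _ m0 m1 γ hγ0 hγ1 0 (fun s => V τ1 w s - V τ2 w s) (fun s => ?_) s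
    · simpa using this
    · show _ ≤ _
      rw [hdiff τ2 τ1 (h1.trans h2) h1 w hw s]
      have := mul_nonneg (sub_nonneg.2 h2) (hD0 0 s _ (hw s))
      linarith
  have hzero : ∀ s, V τ0 (π 0) s - V 0 (π 0) s ≤ 0 := by
    intro s
    obtain ⟨m0, m1⟩ := aux_P P hP0 hP1 _ (hpol 0)
    have := aux_max _ m0 m1 γ hγ0 hγ1 0 (fun s => V τ0 (π 0) s - V 0 (π 0) s) (fun s => ?_) s
    · simpa using this
    · show _ ≤ _
      rw [hdiff 0 τ0 le_rfl hτ0 _ (hpol 0) s]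
      have : KL (π 0 s) (π 0 s) = 0 := by
        unfold KL
        refine Finset.sum_eq_zero fun a _ => ?_
        rw [div_self (hpos 0 s a).ne']; simp
      rw [this]; linarith
  -- averaging
  have havg : ∀ (X : S → ℝ) (B : ℝ), (∀ s, X s ≤ B) → ∑ s, ν s * X s ≤ B := by
    intro X B hX
    calc _ ≤ ∑ s, ν s * B :=
          Finset.sum_le_sum fun s _ => mul_le_mul_of_nonneg_left (hX s) (hν0 s)
      _ = B := by rw [← Finset.sum_mul, hν1, one_mul]
  set F : ℝ → (S → A → ℝ) → ℝ := fun t w => ∑ s, ν s * V t w s with hF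
  have hFd : ∀ t1 t2 w1 w2, F t1 w1 - F t2 w2 = ∑ s, ν s * (V t1 w1 s - V t2 w2 s) := by
    intro t1 t2 w1 w2
    simp only [hF, mul_sub, Finset.sum_sub_distrib]
  have fup : ∀ τ1 τ2 : ℝ, 0 ≤ τ1 → τ1 ≤ τ2 → ∀ w, IsPolicy w →
      F τ2 w - F τ1 w ≤ (τ2 - τ1) * L / (1 - γ) := fun τ1 τ2 h1 h2 w hw => by
    rw [hFd]; exact havg _ _ (hup τ1 τ2 h1 h2 w hw)
  have fdown : ∀ τ1 τ2 : ℝ, 0 ≤ τ1 → τ1 ≤ τ2 → ∀ w, IsPolicy w →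
      F τ1 w - F τ2 w ≤ 0 := fun τ1 τ2 h1 h2 w hw => by
    rw [hFd]; exact havg _ _ (hdown τ1 τ2 h1 h2 w hw)
  have fzero : F τ0 (π 0) - F 0 (π 0) ≤ 0 := by
    rw [hFd]; exact havg _ _ hzero
  set D : ℕ → ℝ := fun k => ∑ s, ν s * KL (π k s) (πstar s) with hD
  have hDn : ∀ k, 0 ≤ D k := fun k =>
    Finset.sum_nonneg fun s _ => mul_nonneg (hν0 s) (hD0 k s _ (hπstar s))
  have hDL0 : D 0 ≤ L := havg _ _ fun s => hDL s _ (hπstar s)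
  -- one step
  have hone : ∀ k, F (τ k) (π (k+1)) - F (τ k) πstar + τ k / (1 - γ) * D (k+1)
      ≤ γ * (F (τ k) (π k) - F (τ k) πstar + τ k / (1 - γ) * D k) := by
    intro k
    set hr : S → (A → ℝ) → ℝ := fun s' p => h s' p + τ k * KL (π 0 s') p with hhr
    set Q := Qfun P c hr γ (π k) (V (τ k) (π k)) with hQ
    set Ad : (S → A → ℝ) → S → ℝ := fun w s =>
      (∑ a, Q s a * w s a) + hr s (w s) with hAd
    -- performance difference
    have hpd : ∀ w, IsPolicy w → ∀ s, V (τ k) w s - V (τ k) (π k) s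
        = (Ad w s - Ad (π k) s)
          + γ * ∑ s', (∑ a, w s a * P s a s') * (V (τ k) w s' - V (τ k) (π k) s') := by
      intro w hw s
      have e1 := hV (τ k) (hτp k).le w hw s
      have e2 := hV (τ k) (hτp k).le (π k) (hpol k) s
      simp only at e1 e2
      simp only [hAd, hQ]
      rw [aux_Q P c hr γ (π k) w hw, aux_Q P c hr γ (π k) (π k) (hpol k)]
      simp only [hhr, mul_sub, Finset.sum_sub_distrib]
      linear_combination e1 - e2
    have hprox : ∀ s p, p ∈ simplex A →
        η k * Ad (π (k+1)) s + KL (π k s) (π (k+1) s) + (1 + η k * τ k) * KL (π (k+1) s) p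
        ≤ η k * ((∑ a, Q s a * p a) + hr s p) + KL (π k s) p := by
      intro s p hp
      refine aux_prox (Q s) (h s) (h' s) ?_ (η k) (τ k) (hηp k).le (hτp k).le (π 0 s) (π k s)
        (π (k+1) s) (hpos 0 s) (hpos k s) (hpos (k+1) s) (hstep k s) p hp
      intro p hp q hq
      have := hconv s p hp q hq
      linarith
    have hAneg : ∀ s, Ad (π (k+1)) s - Ad (π k) s ≤ 0 := by
      intro s
      have h1 := hprox s (π k s) (hpol k s)
      change _ ≤ η k * Ad (π k) s + _ at h1
      have h2 : KL (π k s) (π k s) = 0 := by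
        unfold KL
        refine Finset.sum_eq_zero fun a _ => ?_
        rw [div_self (hpos k s a).ne']; simp
      have h3 := hD0 k s _ (hpol (k+1) s)
      have h4 := hD0 (k+1) s _ (hpol k s)
      have h5 : 0 ≤ (1 + η k * τ k) * KL (π (k+1) s) (π k s) :=
        mul_nonneg (by have := mul_pos (hηp k) (hτp k); linarith) h4
      have h6 : η k * (Ad (π (k+1)) s - Ad (π k) s) ≤ 0 := by linarith
      exact nonpos_of_mul_nonpos_right h6 (hηp k)
    obtain ⟨m0, m1⟩ := aux_P P hP0 hP1 _ (hpol (k+1))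
    have hVneg : ∀ s, V (τ k) (π (k+1)) s - V (τ k) (π k) s ≤ 0 := by
      intro s
      have := aux_max _ m0 m1 γ hγ0 hγ1 0
        (fun s => V (τ k) (π (k+1)) s - V (τ k) (π k) s) (fun s => ?_) s
      · simpa using this
      · show _ ≤ _
        rw [hpd _ (hpol (k+1)) s]
        linarith [hAneg s]
    have hVA : ∀ s, V (τ k) (π (k+1)) s - V (τ k) (π k) s ≤ Ad (π (k+1)) s - Ad (π k) s := by
      intro s
      rw [hpd _ (hpol (k+1)) s]
      have : ∑ s', (∑ a, π (k+1) s a * P s a s') *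
          (V (τ k) (π (k+1)) s' - V (τ k) (π k) s') ≤ 0 :=
        Finset.sum_nonpos fun s' _ => mul_nonpos_of_nonneg_of_nonpos (m0 s s') (hVneg s')
      nlinarith
    have hst : F (τ k) πstar - F (τ k) (π k)
        = (∑ s, ν s * (Ad πstar s - Ad (π k) s)) + γ * (F (τ k) πstar - F (τ k) (π k)) := by
      have e : ∑ s, ν s * ∑ s', (∑ a, πstar s a * P s a s') *
          (V (τ k) πstar s' - V (τ k) (π k) s') = F (τ k) πstar - F (τ k) (π k) := by
        rw [hFd]
        simp only [Finset.mul_sum]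
        rw [Finset.sum_comm]
        refine Finset.sum_congr rfl fun s' _ => ?_
        simp only [← mul_assoc]
        rw [← Finset.sum_mul, hstat]
      calc F (τ k) πstar - F (τ k) (π k)
          = ∑ s, (ν s * (Ad πstar s - Ad (π k) s) + γ * (ν s *
            ∑ s', (∑ a, πstar s a * P s a s') * (V (τ k) πstar s' - V (τ k) (π k) s'))) := by
            rw [hFd]
            refine Finset.sum_congr rfl fun s _ => ?_
            rw [hpd _ hπstar s]; ring
        _ = _ := by rw [Finset.sum_add_distrib, ← Finset.mul_sum, e]
    have hsum : η k * (F (τ k) (π (k+1)) - F (τ k) (π k)) + (1 / γ) * D (k+1)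
        ≤ η k * (∑ s, ν s * (Ad πstar s - Ad (π k) s)) + D k := by
      rw [hFd]
      simp only [hD, Finset.mul_sum]
      rw [← Finset.sum_add_distrib, ← Finset.sum_add_distrib]
      refine Finset.sum_le_sum fun s _ => ?_
      have h1 := hprox s (πstar s) (hπstar s)
      change _ ≤ η k * Ad πstar s + _ at h1
      rw [hη k] at h1
      have h3 := hD0 k s _ (hpol (k+1) s)
      have h4 := mul_le_mul_of_nonneg_left (hVA s) (hηp k).le
      have h5 : η k * (V (τ k) (π (k+1)) s - V (τ k) (π k) s)
          + 1 / γ * KL (π (k+1) s) (πstar s)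
          ≤ η k * (Ad πstar s - Ad (π k) s) + KL (π k s) (πstar s) := by linarith
      have := mul_le_mul_of_nonneg_left h5 (hν0 s)
      linarith
    have h8 : ∑ s, ν s * (Ad πstar s - Ad (π k) s)
        = (1 - γ) * (F (τ k) πstar - F (τ k) (π k)) := by linarith
    rw [h8] at hsum
    have h9 : τ k / (1 - γ) = 1 / (η k * γ) := by
      rw [div_eq_div_iff hg.ne' (mul_pos (hηp k) hγ0).ne']
      linarith [hητ k]
    rw [h9]
    have h10 := hηp k
    have h11 := mul_le_mul_of_nonneg_left hsum (inv_pos.2 h10).le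
    have e1 : (η k)⁻¹ * (η k * (F (τ k) (π (k+1)) - F (τ k) (π k)) + (1 / γ) * D (k+1))
        = F (τ k) (π (k+1)) - F (τ k) (π k) + 1 / (η k * γ) * D (k+1) := by
      field_simp
    have e2 : (η k)⁻¹ * (η k * ((1 - γ) * (F (τ k) πstar - F (τ k) (π k))) + D k)
        = (1 - γ) * (F (τ k) πstar - F (τ k) (π k)) + γ * (1 / (η k * γ) * D k) := by
      field_simp
    rw [e1, e2] at h11
    linarith
  set E : ℕ → ℝ := fun k => F (τ k) (π k) - F (τ k) πstar + τ k / (1 - γ) * D k with hE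
  have hτs : ∀ k, τ (k+1) = γ * τ k := fun k => by rw [hτ, hτ, pow_succ]; ring
  have hrec : ∀ k, E (k+1) ≤ γ * E k + τ k * L := by
    intro k
    have hle : τ (k+1) ≤ τ k := by rw [hτs]; nlinarith [hτp k]
    have h1 := hone k
    have h2 := fdown _ _ (hτp (k+1)).le hle _ (hpol (k+1))
    have h3 := fup _ _ (hτp (k+1)).le hle _ hπstar
    have h4 : (τ k - τ (k+1)) * L / (1 - γ) = τ k * L := by
      rw [hτs]; field_simp
    rw [h4] at h3
    have h5 : τ (k+1) / (1 - γ) * D (k+1) ≤ τ k / (1 - γ) * D (k+1) :=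
      mul_le_mul_of_nonneg_right (div_le_div_of_nonneg_right hle hg.le) (hDn _)
    simp only [hE]
    linarith
  have hind : ∀ k : ℕ, E k ≤ γ ^ k * (E 0 + k * τ0 * L / γ) := by
    intro k
    induction k with
    | zero => simp
    | succ k ih =>
      have h1 := mul_le_mul_of_nonneg_left ih hγ0.le
      refine (hrec k).trans ((add_le_add_left h1 _).trans (le_of_eq ?_))
      rw [hτ]; push_cast; field_simp; ring
  intro k
  change F 0 (π k) - F 0 πstar ≤ γ ^ k * (F 0 (π 0) - F 0 πstar + _)
  have hτz : τ 0 = τ0 := by rw [hτ]; simp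
  have hE0 : E 0 ≤ F 0 (π 0) - F 0 πstar + τ0 / (1 - γ) * L := by
    have h1 := fdown 0 τ0 le_rfl hτ0 _ hπstar
    have h2 : τ0 / (1 - γ) * D 0 ≤ τ0 / (1 - γ) * L :=
      mul_le_mul_of_nonneg_left hDL0 (by positivity)
    simp only [hE, hτz]
    linarith
  have hfin : F 0 (π k) - F 0 πstar ≤ E k + γ ^ k * (τ0 / (1 - γ) * L) := by
    have h1 := fdown 0 (τ k) le_rfl (hτp k).le _ (hpol k)
    have h2 := fup 0 (τ k) le_rfl (hτp k).le _ hπstar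
    have h3 : 0 ≤ τ k / (1 - γ) * D k :=
      mul_nonneg (div_nonneg (hτp k).le hg.le) (hDn k)
    have h4 : (τ k - 0) * L / (1 - γ) = γ ^ k * (τ0 / (1 - γ) * L) := by
      rw [hτ]; ring
    simp only [hE]
    linarith
  have hgk : 0 ≤ γ ^ k := by positivity
  have h1 := hind k
  have h2 := mul_le_mul_of_nonneg_left hE0 hgk
  have e : γ ^ k * (F 0 (π 0) - F 0 πstar + τ0 * (2 / (1 - γ) + k / γ) * L)
      = γ ^ k * (F 0 (π 0) - F 0 πstar + τ0 / (1 - γ) * L) + γ ^ k * (k * τ0 * L / γ)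
        + γ ^ k * (τ0 / (1 - γ) * L) := by ring
  rw [e]
  linarith

end RL
end
end

section
/- Let γ ∈ (0,1), l = ⌈log_γ(1/4)⌉, and let (X_k), (Y_k), (Z_k) be nonnegative real sequences satisfying X_{k+1} ≤ γ X_k + (Y_k − Y_{k+1}) + Z_k for all k ≥ 0. If Y_k = Y·2^{−(⌊k/l⌋+1)} and Z_k = Z·2^{−(⌊k/l⌋+2)} for some Y ≥ 0 and Z ≥ 0, then for all k ≥ 0: X_k ≤ 2^{−⌊k/l⌋} ( X_0 + Y + 5Z/(4(1−γ)) ). -/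
/-- let `γ ∈ (0,1)`, `l = ⌈log_γ(1/4)⌉`, and let `(X_k)`,
`(Y_k)`, `(Z_k)` be nonnegative sequences with
`X_{k+1} ≤ γ X_k + (Y_k - Y_{k+1}) + Z_k`. If `Y_k = Y·2^{-(⌊k/l⌋+1)}` and
`Z_k = Z·2^{-(⌊k/l⌋+2)}`, then `X_k ≤ 2^{-⌊k/l⌋} (X_0 + Y + 5Z/(4(1-γ)))`. -/
theorem decaying_recursion (γ : ℝ) (hγ0 : 0 < γ) (hγ1 : γ < 1)
    (l : ℕ) (hl : (l : ℤ) = Int.ceil (Real.logb γ (1/4)))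
    (X Y Z : ℕ → ℝ)
    (hXnn : ∀ k, 0 ≤ X k) (hYnn : ∀ k, 0 ≤ Y k) (hZnn : ∀ k, 0 ≤ Z k)
    (hrec : ∀ k, X (k+1) ≤ γ * X k + (Y k - Y (k+1)) + Z k)
    (Ybar Zbar : ℝ) (hYbar : 0 ≤ Ybar) (hZbar : 0 ≤ Zbar)
    (hY : ∀ k, Y k = Ybar * (1/2 : ℝ) ^ (k / l + 1))
    (hZ : ∀ k, Z k = Zbar * (1/2 : ℝ) ^ (k / l + 2)) :
    ∀ k, X k ≤ (1/2 : ℝ) ^ (k / l) *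
      (X 0 + Ybar + 5 * Zbar / (4 * (1 - γ))) := by
  have hlpow : γ ^ l ≤ 1/4 := by
    have h1 : Real.logb γ (1/4) ≤ (l : ℝ) := by
      have := Int.le_ceil (Real.logb γ (1/4))
      rw [← hl] at this
      exact_mod_cast this
    have h2 := (Real.logb_le_iff_le_rpow_of_base_lt_one hγ0 hγ1 (by norm_num : (0:ℝ) < 1/4)).1 h1
    rwa [Real.rpow_natCast] at h2
  have hlpos : 0 < l := by
    rcases Nat.eq_zero_or_pos l with h | h
    · rw [h] at hlpow; norm_num at hlpow
    · exact h
  have hg : 0 < 1 - γ := by linarith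
  obtain ⟨W, hW⟩ : ∃ W, W = Zbar / (1 - γ) := ⟨_, rfl⟩
  have hW0 : 0 ≤ W := by rw [hW]; positivity
  have hZW : Zbar = W * (1 - γ) := by rw [hW]; field_simp
  have hfin : 5 * Zbar / (4 * (1 - γ)) = W + W / 4 := by rw [hW]; field_simp; ring
  have hdiv : ∀ m r, r < l → (m * l + r) / l = m := by
    intro m r hr
    rw [mul_comm, Nat.mul_add_div hlpos, Nat.div_eq_of_lt hr, add_zero]
  have hblock : ∀ m r, r < l → X (m * l + r) ≤
      γ ^ r * X (m * l) + (1/2 : ℝ) ^ m * (W / 4) * (1 - γ ^ r) := by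
    intro m r
    induction r with
    | zero => intro _; simp
    | succ r ih =>
      intro hr
      have h1 := ih (by omega)
      have h2 := hrec (m * l + r)
      have e1 := hdiv m r (by omega)
      have e2 := hdiv m (r + 1) hr
      rw [← add_assoc] at e2 ⊢
      rw [hY, hY, hZ, e1, e2, hZW] at h2
      have h3 := mul_le_mul_of_nonneg_left h1 hγ0.le
      refine h2.trans ?_
      rw [pow_succ γ, pow_add _ m 2]
      nlinarith [h3]
  have hb : ∀ m, X (m * l) ≤ (1/2 : ℝ) ^ m * (X 0 + Ybar + W) := by
    intro m
    induction m with
    | zero => simp; linarith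
    | succ m ih =>
      have h1 := hblock m (l - 1) (by omega)
      have h2 := hrec (m * l + (l - 1))
      have e0 : m * l + (l - 1) + 1 = (m + 1) * l := by
        rw [add_mul, one_mul]; omega
      have e1 := hdiv m (l - 1) (by omega)
      have e2 : (m + 1) * l / l = m + 1 := Nat.mul_div_cancel _ hlpos
      rw [e0, hY, hY, hZ, e1, e2, hZW] at h2
      have h3 := mul_le_mul_of_nonneg_left h1 hγ0.le
      have e3 : γ * γ ^ (l - 1) = γ ^ l := by
        rw [← pow_succ', Nat.sub_add_cancel hlpos]
      have hp : (0:ℝ) < (1/2) ^ m := by positivity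
      have hq : 0 < γ ^ l := by positivity
      have h4 : X ((m+1)*l) ≤ γ ^ l * X (m * l) + (1/2 : ℝ) ^ m * (W / 4) * (1 - γ ^ l)
          + (1/2 : ℝ) ^ m * (Ybar / 4) := by
        rw [← e3]
        refine h2.trans ?_
        rw [pow_add _ m 2, pow_succ _ m]
        nlinarith [h3]
      have h5 : γ ^ l * X (m * l) ≤ 1/4 * X (m * l) :=
        mul_le_mul_of_nonneg_right hlpow (hXnn _)
      have h6 : 0 ≤ (1/2 : ℝ) ^ m * (W / 4) * γ ^ l := by positivity
      have h7 : 0 ≤ (1/2 : ℝ) ^ m * X 0 := mul_nonneg hp.le (hXnn 0)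
      have h8 : 0 ≤ (1/2 : ℝ) ^ m * W := by positivity
      have h9 : 0 ≤ (1/2 : ℝ) ^ m * Ybar := by positivity
      rw [pow_succ _ m]
      nlinarith
  intro k
  have hk : k / l * l + k % l = k := Nat.div_add_mod' k l
  have h1 := hblock (k / l) (k % l) (Nat.mod_lt _ hlpos)
  rw [hk] at h1
  have h2 := hb (k / l)
  rw [hfin]
  have hp : (0:ℝ) < (1/2) ^ (k / l) := by positivity
  have h3 : γ ^ (k % l) * X (k / l * l) ≤ 1 * X (k / l * l) :=
    mul_le_mul_of_nonneg_right (pow_le_one₀ hγ0.le hγ1.le) (hXnn _)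
  have h6 : 0 ≤ (1/2 : ℝ) ^ (k / l) * (W / 4) * γ ^ (k % l) := by positivity
  nlinarith
end

section
/- (Bias bound for the mean iterates of conditional temporal difference.) Let F : ℝⁿ → ℝⁿ be a linear map satisfying ⟨F(θ) − F(θ'), θ − θ'⟩ ≥ Λ_min‖θ − θ'‖₂² and ‖F(θ) − F(θ')‖₂ ≤ Λ_max‖θ − θ'‖₂ for all θ, θ', with 0 < Λ_min ≤ Λ_max, and let θ* satisfy F(θ*) = 0. Let t₀ ≥ max{8Λ_max²/Λ_min², 4}, β_t = 2/(Λ_min(t + t₀ − 1)), and let (θ̄_t)_{t≥1} and (δ̄_t)_{t≥1} in ℝⁿ satisfy θ̄_{t+1} = θ̄_t − β_t F(θ̄_t) + β_t δ̄_t, with ‖θ̄_t − θ*‖₂ ≤ R and ‖δ̄_t‖₂ ≤ C R ρ^α for all t ≥ 1, for some constants R, C > 0, ρ ∈ [0,1), α ∈ ℕ. Then for every t ≥ 1: ‖θ̄_{t+1} − θ*‖₂² ≤ ((t₀−1)(t₀−2)(t₀−3))/((t+t₀−1)(t+t₀−2)(t+t₀−3)) · ‖θ̄_1 − θ*‖₂²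 + 8CR²ρ^α/(3Λ_min) + C²R²ρ^{2α}/Λ_min². -/
open scoped RealInnerProductSpace

/-- bias bound for the mean iterates of conditional temporal
difference: for a linear, strongly monotone, Lipschitz operator `F` with root
`θ*`, stepsizes `β_t = 2/(Λ_min (t + t₀ - 1))` and the perturbed recursion
`θ̄_{t+1} = θ̄_t - β_t F(θ̄_t) + β_t δ̄_t` with `‖θ̄_t - θ*‖ ≤ R` and
`‖δ̄_t‖ ≤ C R ρ^α`, one has for all `t ≥ 1`:
`‖θ̄_{t+1} - θ*‖² ≤ ((t₀-1)(t₀-2)(t₀-3))/((t+t₀-1)(t+t₀-2)(t+t₀-3)) ‖θ̄_1 - θ*‖²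
  + 8CR²ρ^α/(3Λ_min) + C²R²ρ^{2α}/Λ_min²`. -/
theorem ctd_bias_bound {n : ℕ}
    (F : EuclideanSpace ℝ (Fin n) →ₗ[ℝ] EuclideanSpace ℝ (Fin n))
    (Λmin Λmax : ℝ) (hΛ0 : 0 < Λmin) (hΛ : Λmin ≤ Λmax)
    (hmono : ∀ θ θ' : EuclideanSpace ℝ (Fin n),
      Λmin * ‖θ - θ'‖ ^ 2 ≤ ⟪F θ - F θ', θ - θ'⟫)
    (hlip : ∀ θ θ' : EuclideanSpace ℝ (Fin n),
      ‖F θ - F θ'‖ ≤ Λmax * ‖θ - θ'‖)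
    (θstar : EuclideanSpace ℝ (Fin n)) (hθstar : F θstar = 0)
    (t₀ : ℝ) (ht₀ : max (8 * Λmax ^ 2 / Λmin ^ 2) 4 ≤ t₀)
    (β : ℕ → ℝ) (hβ : ∀ t : ℕ, β t = 2 / (Λmin * (t + t₀ - 1)))
    (θbar δbar : ℕ → EuclideanSpace ℝ (Fin n))
    (R C : ℝ) (hR : 0 < R) (hC : 0 < C)
    (ρ : ℝ) (hρ0 : 0 ≤ ρ) (hρ1 : ρ < 1) (α : ℕ)
    (hrec : ∀ t : ℕ, 1 ≤ t →
      θbar (t+1) = θbar t - β t • F (θbar t) + β t • δbar t)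
    (hbound : ∀ t : ℕ, 1 ≤ t → ‖θbar t - θstar‖ ≤ R)
    (hbias : ∀ t : ℕ, 1 ≤ t → ‖δbar t‖ ≤ C * R * ρ ^ α) :
    ∀ t : ℕ, 1 ≤ t →
      ‖θbar (t+1) - θstar‖ ^ 2 ≤
        ((t₀ - 1) * (t₀ - 2) * (t₀ - 3)) /
            ((t + t₀ - 1) * (t + t₀ - 2) * (t + t₀ - 3)) *
            ‖θbar 1 - θstar‖ ^ 2
          + 8 * C * R ^ 2 * ρ ^ α / (3 * Λmin)
          + C ^ 2 * R ^ 2 * ρ ^ (2 * α) / Λmin ^ 2 := by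
  have h8 : 8 ≤ t₀ := by
    refine le_trans ?_ (le_trans (le_max_left _ _) ht₀)
    rw [le_div_iff₀ (by positivity)]
    nlinarith
  have hL : 8 * Λmax ^ 2 ≤ t₀ * Λmin ^ 2 := by
    have := le_trans (le_max_left _ _) ht₀
    rwa [div_le_iff₀ (by positivity)] at this
  set D : ℝ := C * R * ρ ^ α with hD
  have hD0 : 0 ≤ D := by positivity
  have key : ∀ t : ℕ, 1 ≤ t → ∀ s : ℝ, s = t + t₀ - 1 →
      ‖θbar (t+1) - θstar‖ ^ 2 ≤ (1 - 3 / s) * ‖θbar t - θstar‖ ^ 2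
        + 4 * R * D / (Λmin * s) + 4 * D ^ 2 / (Λmin ^ 2 * s ^ 2) := by
    intro t ht s hs
    have ht1 : (1 : ℝ) ≤ t := by exact_mod_cast ht
    have hst : t₀ ≤ s := by linarith
    have hs0 : 0 < s := by linarith
    have hb : β t = 2 / (Λmin * s) := by rw [hβ, hs]
    have hb0 : 0 < β t := by rw [hb]; positivity
    have hm := hmono (θbar t) θstar
    have hl := hlip (θbar t) θstar
    have hR' := hbound t ht
    have hd := hbias t ht
    rw [hθstar, sub_zero] at hm hl
    have he : θbar (t+1) - θstar
        = ((θbar t - θstar) - β t • F (θbar t)) + β t • δbar t := by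
      rw [hrec t ht]; abel
    rw [he]
    generalize θbar t - θstar = x at *
    generalize F (θbar t) = G at *
    generalize δbar t = d at *
    have h1 : ‖x - β t • G‖ ^ 2 ≤ (1 - 3 / s) * ‖x‖ ^ 2 := by
      rw [norm_sub_sq_real, inner_smul_right, norm_smul, Real.norm_eq_abs, abs_of_pos hb0,
        real_inner_comm]
      have hG : ‖G‖ ^ 2 ≤ Λmax ^ 2 * ‖x‖ ^ 2 := by
        rw [← mul_pow]; exact pow_le_pow_left₀ (norm_nonneg _) hl 2
      have a1 : β t * (Λmin * ‖x‖ ^ 2) ≤ β t * ⟪G, x⟫ := by gcongr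
      have a2 : (β t) ^ 2 * ‖G‖ ^ 2 ≤ (β t) ^ 2 * (Λmax ^ 2 * ‖x‖ ^ 2) := by gcongr
      have a3 : β t * Λmin = 2 / s := by rw [hb]; field_simp
      have a4 : (β t) ^ 2 * Λmax ^ 2 ≤ 1 / s := by
        rw [hb, div_pow, div_mul_eq_mul_div, div_le_div_iff₀ (by positivity) hs0]
        have : 8 * Λmax ^ 2 ≤ s * Λmin ^ 2 := hL.trans (by gcongr)
        nlinarith [sq_nonneg Λmax, mul_le_mul_of_nonneg_right this hs0.le,
          mul_nonneg (sq_nonneg Λmax) hs0.le]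
      have a5 : (β t) ^ 2 * Λmax ^ 2 * ‖x‖ ^ 2 ≤ 1 / s * ‖x‖ ^ 2 := by gcongr
      have a6 : β t * (Λmin * ‖x‖ ^ 2) = 2 / s * ‖x‖ ^ 2 := by rw [← a3]; ring
      have a7 : (1 - 3 / s) * ‖x‖ ^ 2
          = ‖x‖ ^ 2 - 2 * (2 / s * ‖x‖ ^ 2) + 1 / s * ‖x‖ ^ 2 := by ring
      rw [a7, mul_pow]
      linarith
    have h2 : ‖x - β t • G‖ ≤ R := by
      refine le_trans ?_ hR'
      refine le_of_sq_le_sq ?_ (norm_nonneg _)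
      have : 0 ≤ 3 / s * ‖x‖ ^ 2 := by positivity
      linarith
    have h3 : ⟪x - β t • G, d⟫ ≤ R * D :=
      (real_inner_le_norm _ _).trans (by gcongr)
    rw [norm_add_sq_real, inner_smul_right, norm_smul, Real.norm_eq_abs, abs_of_pos hb0, mul_pow]
    have h4 : β t * ⟪x - β t • G, d⟫ ≤ β t * (R * D) := by gcongr
    have h5 : (β t) ^ 2 * ‖d‖ ^ 2 ≤ (β t) ^ 2 * D ^ 2 := by gcongr
    have h6 : 4 * R * D / (Λmin * s) = 2 * (β t * (R * D)) := by rw [hb]; ring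
    have h7 : 4 * D ^ 2 / (Λmin ^ 2 * s ^ 2) = (β t) ^ 2 * D ^ 2 := by rw [hb]; ring
    rw [h6, h7]
    linarith
  have main : ∀ t : ℕ, ‖θbar (t+1) - θstar‖ ^ 2 ≤
        ((t₀ - 1) * (t₀ - 2) * (t₀ - 3)) /
            ((t + t₀ - 1) * (t + t₀ - 2) * (t + t₀ - 3)) *
            ‖θbar 1 - θstar‖ ^ 2 + (8 * R * D / (3 * Λmin) + D ^ 2 / Λmin ^ 2) := by
    intro t
    induction t with
    | zero =>
      have : 0 < (t₀ - 1) * (t₀ - 2) * (t₀ - 3) :=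
        mul_pos (mul_pos (by linarith) (by linarith)) (by linarith)
      simp only [Nat.cast_zero, zero_add]
      rw [div_self this.ne', one_mul]
      have : 0 ≤ 8 * R * D / (3 * Λmin) + D ^ 2 / Λmin ^ 2 := by positivity
      linarith
    | succ k ih =>
      have hk := key (k+1) (by omega) (k + t₀) (by push_cast; ring)
      have hk0 : (0 : ℝ) ≤ k := Nat.cast_nonneg k
      have e1 : ((k + 1 : ℕ) : ℝ) + t₀ - 1 = k + t₀ := by push_cast; ring
      have e2 : ((k + 1 : ℕ) : ℝ) + t₀ - 2 = k + t₀ - 1 := by push_cast; ring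
      have e3 : ((k + 1 : ℕ) : ℝ) + t₀ - 3 = k + t₀ - 2 := by push_cast; ring
      rw [e1, e2, e3]
      have hs8 : 8 ≤ k + t₀ := by linarith
      generalize (k : ℝ) + t₀ = s at *
      have hs0 : 0 < s := by linarith
      have p1 : 0 < s - 1 := by linarith
      have p2 : 0 < s - 2 := by linarith
      have p3 : 0 < s - 3 := by linarith
      have hc : 0 ≤ 1 - 3 / s := by
        rw [sub_nonneg, div_le_one hs0]; linarith
      have ih' := mul_le_mul_of_nonneg_left ih hc
      refine (hk.trans (add_le_add_left (add_le_add_left ih' _) _)).trans ?_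
      have q1 : (1 - 3 / s) * ((t₀ - 1) * (t₀ - 2) * (t₀ - 3) / ((s - 1) * (s - 2) * (s - 3))
          * ‖θbar 1 - θstar‖ ^ 2) = (t₀ - 1) * (t₀ - 2) * (t₀ - 3) / (s * (s - 1) * (s - 2))
          * ‖θbar 1 - θstar‖ ^ 2 := by
        have := p1.ne'
        have := p2.ne'
        have := p3.ne'
        field_simp
      rw [mul_add, q1]
      have q2 : 4 * R * D / (Λmin * s) ≤ 3 / s * (8 * R * D / (3 * Λmin)) := by
        have : 3 / s * (8 * R * D / (3 * Λmin)) = 2 * (4 * R * D / (Λmin * s)) := by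
          field_simp; ring
        have : 0 ≤ 4 * R * D / (Λmin * s) := by positivity
        linarith
      have q3 : 4 * D ^ 2 / (Λmin ^ 2 * s ^ 2) ≤ 3 / s * (D ^ 2 / Λmin ^ 2) := by
        have : 4 * D ^ 2 / (Λmin ^ 2 * s ^ 2) = 4 / s * (1 / s * (D ^ 2 / Λmin ^ 2)) := by
          field_simp
        have h4 : 4 / s ≤ 1 := by rw [div_le_one hs0]; linarith
        have h0 : 0 ≤ 1 / s * (D ^ 2 / Λmin ^ 2) := by positivity
        have : 3 / s * (D ^ 2 / Λmin ^ 2) = 3 * (1 / s * (D ^ 2 / Λmin ^ 2)) := by ring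
        nlinarith
      linarith
  intro t _
  refine (main t).trans (le_of_eq ?_)
  rw [hD]
  ring
end
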